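/- arXiv:2109.09485 — 9 statements merged into one kernel-verified Lean document; each statement's English description precedes it below -/
import Mathlib

section
/- For every real s > -1 and every positive integer N there exists a constant C = C(s, N) ≥ 1 such that for all μ ∈ [0,1] and all z₁, z₂ ∈ ℝ^N with μ + |z₁| + |z₂| > 0, one has C⁻¹ (μ² + |z₁|² + |z₂|²)^{s/2} ≤ ∫₀¹ (μ² + |z₁ + λ(z₂ − z₁)|²)^{s/2} λ dλ ≤ C (μ² + |z₁|² + |z₂|²)^{s/2}. -/
open MeasureTheory

/-!
Let `t` minimise `‖x + l • (y - x)‖` over `l ∈ [0, 1]`. The triangle inequality through the minimum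
gives `|l - t| ‖y - x‖ ≤ 2 ‖x + l • (y - x)‖`, so that, up to a constant factor,
`ρ l = √(μ² + ‖x + l • (y - x)‖²)` lies between `|l - t| R` and `R`, where
`R = √(μ² + ‖x‖² + ‖y‖²)`. Hence `(ρ l / R) ^ s` lies between multiples of `|l - t| ^ max s 0` and
`|l - t| ^ min s 0`, whose integrals against `l` over `[0, 1]` are bounded below and above uniformly
in `t`.
-/

section AbsRpow

open Set

variable {r : ℝ}

lemma intervalIntegrable_abs_rpow (hr : -1 < r) (a b : ℝ) :
    IntervalIntegrable (fun x : ℝ => |x| ^ r) volume a b := by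
  refine intervalIntegrable_of_even (fun x => by rw [abs_neg]) (fun x hx => ?_)
  refine (intervalIntegral.intervalIntegrable_rpow' hr).congr fun y hy => ?_
  rw [uIoc_of_le hx.le] at hy
  simp only [abs_of_pos hy.1]

lemma intervalIntegrable_abs_sub_rpow (hr : -1 < r) (t a b : ℝ) :
    IntervalIntegrable (fun l : ℝ => |l - t| ^ r) volume a b := by
  simpa using (intervalIntegrable_abs_rpow hr (a - t) (b - t)).comp_sub_right t

lemma intervalIntegrable_abs_sub_rpow_mul (hr : -1 < r) (t a b : ℝ) :
    IntervalIntegrable (fun l : ℝ => |l - t| ^ r * l) volume a b :=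
  (intervalIntegrable_abs_sub_rpow hr t a b).mul_continuousOn continuousOn_id

lemma integral_abs_sub_rpow_mul_le (hr : -1 < r) {t : ℝ} (ht : t ∈ Icc (0 : ℝ) 1) :
    ∫ l in (0 : ℝ)..1, |l - t| ^ r * l ≤ ∫ x in (-1 : ℝ)..1, |x| ^ r :=
  calc ∫ l in (0 : ℝ)..1, |l - t| ^ r * l
    _ ≤ ∫ l in (0 : ℝ)..1, |l - t| ^ r :=
      intervalIntegral.integral_mono_on zero_le_one (intervalIntegrable_abs_sub_rpow_mul hr t 0 1)
        (intervalIntegrable_abs_sub_rpow hr t 0 1)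
        fun l hl => mul_le_of_le_one_right (by positivity) hl.2
    _ = ∫ x in (0 - t)..(1 - t), |x| ^ r :=
      intervalIntegral.integral_comp_sub_right (fun x => |x| ^ r) t
    _ ≤ ∫ x in (-1 : ℝ)..1, |x| ^ r :=
      intervalIntegral.integral_mono_interval
        (by linarith [ht.2]) (by linarith) (by linarith [ht.1])
        (.of_forall fun x => Real.rpow_nonneg (abs_nonneg x) r)
        (intervalIntegrable_abs_rpow hr (-1) 1)

lemma continuous_uncurry_abs_sub_rpow_mul (hr : 0 ≤ r) :
    Continuous (Function.uncurry fun t l : ℝ => |l - t| ^ r * l) :=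
  ((by fun_prop : Continuous fun p : ℝ × ℝ => |p.2 - p.1|).rpow_const fun _ => .inr hr).mul
    continuous_snd

lemma integral_abs_sub_rpow_mul_pos (hr : 0 ≤ r) (t : ℝ) :
    0 < ∫ l in (0 : ℝ)..1, |l - t| ^ r * l := by
  refine intervalIntegral.integral_pos zero_lt_one
    ((continuous_uncurry_abs_sub_rpow_mul hr).comp (.prodMk_right t)).continuousOn
    (fun l hl => mul_nonneg (by positivity) hl.1.le) ?_
  obtain ⟨l, hl, hlt⟩ : ∃ l ∈ Ioo (0 : ℝ) 1, l ≠ t :=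
    (Ioo_infinite (zero_lt_one' ℝ)).exists_notMem_finset {t} |>.imp (by simp)
  exact ⟨l, Ioo_subset_Icc_self hl,
    mul_pos (Real.rpow_pos_of_pos (abs_pos.2 (sub_ne_zero.2 hlt)) r) hl.1⟩

lemma exists_pos_forall_le_integral_abs_sub_rpow_mul (hr : 0 ≤ r) :
    ∃ c > 0, ∀ t ∈ Icc (0 : ℝ) 1, c ≤ ∫ l in (0 : ℝ)..1, |l - t| ^ r * l := by
  have hcont : Continuous fun t : ℝ => ∫ l in (0 : ℝ)..1, |l - t| ^ r * l :=
    intervalIntegral.continuous_parametric_intervalIntegral_of_continuous'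
      (continuous_uncurry_abs_sub_rpow_mul hr) 0 1
  obtain ⟨t₀, -, hmin⟩ :=
    isCompact_Icc.exists_isMinOn (nonempty_Icc.2 zero_le_one) hcont.continuousOn
  exact ⟨_, integral_abs_sub_rpow_mul_pos hr t₀, fun t ht => hmin ht⟩

end AbsRpow

section RpowBounds

variable {R u v : ℝ}

lemma mul_rpow_max_zero_le_rpow (hR : 0 < R) (hv : 0 < v) (hvu : R * v ≤ u) (huR : u ≤ R)
    (s : ℝ) :
    R ^ s * v ^ max s 0 ≤ u ^ s := by
  have hvq : v ≤ u / R := (le_div_iff₀' hR).2 hvu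
  have hq : 0 < u / R := hv.trans_le hvq
  calc R ^ s * v ^ max s 0
    _ ≤ R ^ s * (u / R) ^ max s 0 := by gcongr
    _ ≤ R ^ s * (u / R) ^ s := by
      gcongr ?_ * ?_
      exact Real.rpow_le_rpow_of_exponent_ge hq ((div_le_one hR).2 huR) (le_max_left s 0)
    _ = u ^ s := by rw [← Real.mul_rpow hR.le hq.le, mul_div_cancel₀ u hR.ne']

lemma rpow_le_mul_rpow_min_zero (hR : 0 < R) (hv : 0 < v) (hvu : R * v ≤ u) (huR : u ≤ R)
    (s : ℝ) :
    u ^ s ≤ R ^ s * v ^ min s 0 := by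
  have hvq : v ≤ u / R := (le_div_iff₀' hR).2 hvu
  have hq : 0 < u / R := hv.trans_le hvq
  calc u ^ s
    _ = R ^ s * (u / R) ^ s := by rw [← Real.mul_rpow hR.le hq.le, mul_div_cancel₀ u hR.ne']
    _ ≤ R ^ s * (u / R) ^ min s 0 := by
      gcongr ?_ * ?_
      exact Real.rpow_le_rpow_of_exponent_ge hq ((div_le_one hR).2 huR) (min_le_left s 0)
    _ ≤ R ^ s * v ^ min s 0 := by
      gcongr ?_ * ?_
      exact Real.rpow_le_rpow_of_nonpos hv hvq (min_le_right s 0)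

end RpowBounds

lemma ae_restrict_mem_and_ne {α : Type*} [MeasurableSpace α] {ν : Measure α} [NullSingletonClass ν]
    {S : Set α} (hS : MeasurableSet S) (t : α) : ∀ᵐ x ∂ν.restrict S, x ∈ S ∧ x ≠ t :=
  (ae_restrict_mem hS).and (ae_restrict_of_ae (Measure.ae_ne ν t))

/-- On `[0, 1]` the function `ρ` is at most its scale `R`, and it is small relative to `R` only near
the point `t`, where it decays at most linearly. These are the bounds that control
`∫ l in 0..1, ρ l ^ s * l` for `-1 < s`; the slope `δ` is taken relative to `R`, so that the
constants depend only on `s` and `δ`. -/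
structure IsLinearlyPinched (δ R t : ℝ) (ρ : ℝ → ℝ) : Prop where
  mul_abs_sub_le : ∀ l ∈ Set.Icc (0 : ℝ) 1, R * (δ * |l - t|) ≤ ρ l
  le : ∀ l ∈ Set.Icc (0 : ℝ) 1, ρ l ≤ R

namespace IsLinearlyPinched

open Set

variable {δ R t s : ℝ} {ρ : ℝ → ℝ}

lemma mul_le_rpow_mul (h : IsLinearlyPinched δ R t ρ) (hδ : 0 < δ) (hR : 0 < R) {l : ℝ}
    (hl : l ∈ Icc (0 : ℝ) 1) (hlt : l ≠ t) :
    R ^ s * δ ^ max s 0 * (|l - t| ^ max s 0 * l) ≤ ρ l ^ s * l := by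
  have hpos : 0 < |l - t| := abs_pos.2 (sub_ne_zero.2 hlt)
  have hle := mul_rpow_max_zero_le_rpow hR (mul_pos hδ hpos) (h.mul_abs_sub_le l hl) (h.le l hl) s
  rw [Real.mul_rpow hδ.le hpos.le, ← mul_assoc] at hle
  rw [← mul_assoc]
  exact mul_le_mul_of_nonneg_right hle hl.1

lemma rpow_mul_le_mul (h : IsLinearlyPinched δ R t ρ) (hδ : 0 < δ) (hR : 0 < R) {l : ℝ}
    (hl : l ∈ Icc (0 : ℝ) 1) (hlt : l ≠ t) :
    ρ l ^ s * l ≤ R ^ s * δ ^ min s 0 * (|l - t| ^ min s 0 * l) := by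
  have hpos : 0 < |l - t| := abs_pos.2 (sub_ne_zero.2 hlt)
  have hle := rpow_le_mul_rpow_min_zero hR (mul_pos hδ hpos) (h.mul_abs_sub_le l hl) (h.le l hl) s
  rw [Real.mul_rpow hδ.le hpos.le, ← mul_assoc] at hle
  rw [← mul_assoc]
  exact mul_le_mul_of_nonneg_right hle hl.1

lemma intervalIntegrable_rpow_mul (h : IsLinearlyPinched δ R t ρ) (hρ : Measurable ρ) (hδ : 0 < δ)
    (hR : 0 < R) (hs : -1 < s) :
    IntervalIntegrable (fun l => ρ l ^ s * l) volume 0 1 := by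
  have hdom := (intervalIntegrable_abs_sub_rpow_mul (lt_min hs neg_one_lt_zero) t 0 1).const_mul
    (R ^ s * δ ^ min s 0)
  refine hdom.mono_fun' ((hρ.pow_const s).mul measurable_id).aestronglyMeasurable ?_
  rw [uIoc_of_le zero_le_one]
  filter_upwards [ae_restrict_mem_and_ne measurableSet_Ioc t] with l ⟨hl_mem, hlt⟩
  have hl := Ioc_subset_Icc_self hl_mem
  have hρl : 0 ≤ ρ l := le_trans (by positivity) (h.mul_abs_sub_le l hl)
  rw [Real.norm_of_nonneg (mul_nonneg (Real.rpow_nonneg hρl s) hl.1)]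
  exact h.rpow_mul_le_mul hδ hR hl hlt

lemma mul_integral_le (h : IsLinearlyPinched δ R t ρ) (hρ : Measurable ρ) (hδ : 0 < δ)
    (hR : 0 < R) (hs : -1 < s) :
    R ^ s * δ ^ max s 0 * ∫ l in (0 : ℝ)..1, |l - t| ^ max s 0 * l ≤
      ∫ l in (0 : ℝ)..1, ρ l ^ s * l := by
  rw [← intervalIntegral.integral_const_mul]
  refine intervalIntegral.integral_mono_ae_restrict zero_le_one
    ((intervalIntegrable_abs_sub_rpow_mul (lt_max_of_lt_left hs) t 0 1).const_mul _)
    (h.intervalIntegrable_rpow_mul hρ hδ hR hs) ?_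
  filter_upwards [ae_restrict_mem_and_ne measurableSet_Icc t] with l ⟨hl, hlt⟩
  exact h.mul_le_rpow_mul hδ hR hl hlt

lemma integral_le_mul (h : IsLinearlyPinched δ R t ρ) (hρ : Measurable ρ) (hδ : 0 < δ)
    (hR : 0 < R) (hs : -1 < s) :
    ∫ l in (0 : ℝ)..1, ρ l ^ s * l ≤
      R ^ s * δ ^ min s 0 * ∫ l in (0 : ℝ)..1, |l - t| ^ min s 0 * l := by
  rw [← intervalIntegral.integral_const_mul]
  refine intervalIntegral.integral_mono_ae_restrict zero_le_one
    (h.intervalIntegrable_rpow_mul hρ hδ hR hs)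
    ((intervalIntegrable_abs_sub_rpow_mul (lt_min hs neg_one_lt_zero) t 0 1).const_mul _) ?_
  filter_upwards [ae_restrict_mem_and_ne measurableSet_Icc t] with l ⟨hl, hlt⟩
  exact h.rpow_mul_le_mul hδ hR hl hlt

theorem exists_const_forall_integral_bounds (hs : -1 < s) (hδ : 0 < δ) :
    ∃ C : ℝ, 1 ≤ C ∧ ∀ (R t : ℝ) (ρ : ℝ → ℝ), 0 < R → t ∈ Icc (0 : ℝ) 1 → Measurable ρ →
      IsLinearlyPinched δ R t ρ →
        C⁻¹ * R ^ s ≤ ∫ l in (0 : ℝ)..1, ρ l ^ s * l ∧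
          ∫ l in (0 : ℝ)..1, ρ l ^ s * l ≤ C * R ^ s := by
  obtain ⟨c, hc, hcJ⟩ := exists_pos_forall_le_integral_abs_sub_rpow_mul (le_max_right s 0)
  set a : ℝ := δ ^ max s 0 * c
  set b : ℝ := δ ^ min s 0 * ∫ x in (-1 : ℝ)..1, |x| ^ min s 0
  have ha : 0 < a := by positivity
  refine ⟨max 1 (max a⁻¹ b), le_max_left _ _, fun R t ρ hR ht hρ h => ⟨?_, ?_⟩⟩
  · calc (max 1 (max a⁻¹ b))⁻¹ * R ^ s
      _ ≤ a * R ^ s := by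
        gcongr
        exact inv_le_of_inv_le₀ ha ((le_max_left _ _).trans (le_max_right _ _))
      _ = R ^ s * δ ^ max s 0 * c := by ring
      _ ≤ R ^ s * δ ^ max s 0 * ∫ l in (0 : ℝ)..1, |l - t| ^ max s 0 * l := by
        gcongr
        exact hcJ t ht
      _ ≤ ∫ l in (0 : ℝ)..1, ρ l ^ s * l := h.mul_integral_le hρ hδ hR hs
  · calc ∫ l in (0 : ℝ)..1, ρ l ^ s * l
      _ ≤ R ^ s * δ ^ min s 0 * ∫ l in (0 : ℝ)..1, |l - t| ^ min s 0 * l :=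
        h.integral_le_mul hρ hδ hR hs
      _ ≤ R ^ s * δ ^ min s 0 * ∫ x in (-1 : ℝ)..1, |x| ^ min s 0 := by
        gcongr
        exact integral_abs_sub_rpow_mul_le (lt_min hs neg_one_lt_zero) ht
      _ = b * R ^ s := by ring
      _ ≤ max 1 (max a⁻¹ b) * R ^ s := by
        gcongr
        exact (le_max_right _ _).trans (le_max_right _ _)

end IsLinearlyPinched

section Segment

open Set

variable {E : Type*} [SeminormedAddCommGroup E] [NormedSpace ℝ E]

lemma norm_add_smul_sub_le_max (x y : E) {l : ℝ} (hl : l ∈ Icc (0 : ℝ) 1) :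
    ‖x + l • (y - x)‖ ≤ max ‖x‖ ‖y‖ :=
  convexOn_univ_norm.le_max_of_mem_segment (mem_univ x) (mem_univ y)
    (segment_eq_image' ℝ x y ▸ mem_image_of_mem _ hl)

lemma exists_forall_abs_sub_mul_norm_sub_le (x y : E) :
    ∃ t ∈ Icc (0 : ℝ) 1, ∀ l ∈ Icc (0 : ℝ) 1,
      |l - t| * ‖y - x‖ ≤ 2 * ‖x + l • (y - x)‖ := by
  obtain ⟨t, ht, hmin⟩ := isCompact_Icc.exists_isMinOn (nonempty_Icc.2 zero_le_one)
    (by fun_prop : Continuous fun l : ℝ => ‖x + l • (y - x)‖).continuousOn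
  refine ⟨t, ht, fun l hl => ?_⟩
  have hmin_l : ‖x + t • (y - x)‖ ≤ ‖x + l • (y - x)‖ := hmin hl
  calc |l - t| * ‖y - x‖
    _ = ‖(x + l • (y - x)) - (x + t • (y - x))‖ := by
      rw [add_sub_add_left_eq_sub, ← sub_smul, norm_smul, Real.norm_eq_abs]
    _ ≤ ‖x + l • (y - x)‖ + ‖x + t • (y - x)‖ := norm_sub_le _ _
    _ ≤ 2 * ‖x + l • (y - x)‖ := by linarith

lemma norm_left_le_norm_add_smul_sub_add (x y : E) {l : ℝ} (hl : l ∈ Icc (0 : ℝ) 1) :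
    ‖x‖ ≤ ‖x + l • (y - x)‖ + ‖y - x‖ :=
  calc ‖x‖
    _ = ‖(x + l • (y - x)) - l • (y - x)‖ := by rw [add_sub_cancel_right]
    _ ≤ ‖x + l • (y - x)‖ + ‖l • (y - x)‖ := norm_sub_le _ _
    _ ≤ ‖x + l • (y - x)‖ + ‖y - x‖ := by
      rw [norm_smul, Real.norm_of_nonneg hl.1]
      gcongr
      exact mul_le_of_le_one_left (norm_nonneg _) hl.2

lemma norm_right_le_norm_add_smul_sub_add (x y : E) {l : ℝ} (hl : l ∈ Icc (0 : ℝ) 1) :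
    ‖y‖ ≤ ‖x + l • (y - x)‖ + ‖y - x‖ := by
  have hswap : y + (1 - l) • (x - y) = x + l • (y - x) := by module
  have hl' : 1 - l ∈ Icc (0 : ℝ) 1 := ⟨sub_nonneg.2 hl.2, sub_le_self 1 hl.1⟩
  simpa only [hswap, norm_sub_rev x y] using norm_left_le_norm_add_smul_sub_add y x hl'

lemma sqrt_sq_add_norm_sq_le (μ : ℝ) (x y : E) {l : ℝ} (hl : l ∈ Icc (0 : ℝ) 1) :
    √(μ ^ 2 + ‖x + l • (y - x)‖ ^ 2) ≤ √(μ ^ 2 + ‖x‖ ^ 2 + ‖y‖ ^ 2) := by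
  refine Real.sqrt_le_sqrt ?_
  rcases le_max_iff.1 (norm_add_smul_sub_le_max x y hl) with hx | hy
  · linarith [pow_le_pow_left₀ (norm_nonneg _) hx 2, sq_nonneg ‖y‖]
  · linarith [pow_le_pow_left₀ (norm_nonneg _) hy 2, sq_nonneg ‖x‖]

lemma exists_isLinearlyPinched_sqrt (μ : ℝ) (x y : E) :
    ∃ t ∈ Icc (0 : ℝ) 1, IsLinearlyPinched (1 / 5) √(μ ^ 2 + ‖x‖ ^ 2 + ‖y‖ ^ 2) t
      fun l => √(μ ^ 2 + ‖x + l • (y - x)‖ ^ 2) := by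
  obtain ⟨t, ht, hsep⟩ := exists_forall_abs_sub_mul_norm_sub_le x y
  refine ⟨t, ht, fun l hl => ?_, fun l hl => sqrt_sq_add_norm_sq_le μ x y hl⟩
  have hw : |l - t| ≤ 1 := abs_le.2 ⟨by linarith [hl.1, ht.2], by linarith [hl.2, ht.1]⟩
  have three_mul_bound {z : E} (hz : ‖z‖ ≤ ‖x + l • (y - x)‖ + ‖y - x‖) :
      (|l - t| * ‖z‖) ^ 2 ≤ (3 * ‖x + l • (y - x)‖) ^ 2 := by
    refine pow_le_pow_left₀ (by positivity) ?_ 2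
    calc |l - t| * ‖z‖
      _ ≤ |l - t| * ‖x + l • (y - x)‖ + |l - t| * ‖y - x‖ := by rw [← mul_add]; gcongr
      _ ≤ 1 * ‖x + l • (y - x)‖ + 2 * ‖x + l • (y - x)‖ :=
        add_le_add (by gcongr) (hsep l hl)
      _ = 3 * ‖x + l • (y - x)‖ := by ring
  have hx := three_mul_bound (norm_left_le_norm_add_smul_sub_add x y hl)
  have hy := three_mul_bound (norm_right_le_norm_add_smul_sub_add x y hl)
  have hμ : |l - t| ^ 2 * μ ^ 2 ≤ μ ^ 2 :=
    mul_le_of_le_one_left (sq_nonneg μ) (pow_le_one₀ (abs_nonneg _) hw)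
  refine Real.le_sqrt_of_sq_le ?_
  rw [mul_pow, Real.sq_sqrt (by positivity)]
  linarith [sq_nonneg μ, sq_nonneg ‖x + l • (y - x)‖]

end Segment

theorem stmt0_general (s : ℝ) (hs : -1 < s) :
    ∃ C : ℝ, 1 ≤ C ∧
      ∀ (E : Type*) [SeminormedAddCommGroup E] [NormedSpace ℝ E] (μ : ℝ) (z₁ z₂ : E),
        0 < μ ^ 2 + ‖z₁‖ ^ 2 + ‖z₂‖ ^ 2 →
          C⁻¹ * (μ ^ 2 + ‖z₁‖ ^ 2 + ‖z₂‖ ^ 2) ^ (s / 2) ≤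
              (∫ l in (0 : ℝ)..1, (μ ^ 2 + ‖z₁ + l • (z₂ - z₁)‖ ^ 2) ^ (s / 2) * l) ∧
            (∫ l in (0 : ℝ)..1, (μ ^ 2 + ‖z₁ + l • (z₂ - z₁)‖ ^ 2) ^ (s / 2) * l) ≤
              C * (μ ^ 2 + ‖z₁‖ ^ 2 + ‖z₂‖ ^ 2) ^ (s / 2) := by
  obtain ⟨C, hC, hbounds⟩ :=
    IsLinearlyPinched.exists_const_forall_integral_bounds hs (by norm_num : (0 : ℝ) < 1 / 5)
  refine ⟨C, hC, fun E _ _ μ z₁ z₂ hpos => ?_⟩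
  obtain ⟨t, ht, hpinched⟩ := exists_isLinearlyPinched_sqrt μ z₁ z₂
  have hmeas : Measurable fun l : ℝ => √(μ ^ 2 + ‖z₁ + l • (z₂ - z₁)‖ ^ 2) :=
    Continuous.measurable (by fun_prop)
  have hsqrt (l : ℝ) : (μ ^ 2 + ‖z₁ + l • (z₂ - z₁)‖ ^ 2) ^ (s / 2) =
      √(μ ^ 2 + ‖z₁ + l • (z₂ - z₁)‖ ^ 2) ^ s := Real.rpow_div_two_eq_sqrt s (by positivity)
  simp only [hsqrt, Real.rpow_div_two_eq_sqrt s hpos.le]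
  exact hbounds _ t _ (Real.sqrt_pos.2 hpos) ht hmeas hpinched

lemma sq_add_sq_add_sq_pos_of_add_add_pos {a b c : ℝ} (h : 0 < a + b + c) :
    0 < a ^ 2 + b ^ 2 + c ^ 2 := by
  nlinarith [sq_nonneg (a - b), sq_nonneg (b - c), sq_nonneg (a - c), pow_pos h 2]

/-- two-sided bound for `∫₀¹ (μ² + |z₁ + λ(z₂ − z₁)|²)^{s/2} λ dλ`. -/
theorem stmt0 (s : ℝ) (hs : -1 < s) (N : ℕ) (hN : 0 < N) :
    ∃ C : ℝ, 1 ≤ C ∧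
      ∀ μ : ℝ, μ ∈ Set.Icc (0 : ℝ) 1 →
        ∀ z₁ z₂ : EuclideanSpace ℝ (Fin N), 0 < μ + ‖z₁‖ + ‖z₂‖ →
          C⁻¹ * (μ ^ 2 + ‖z₁‖ ^ 2 + ‖z₂‖ ^ 2) ^ (s / 2) ≤
              (∫ l in (0 : ℝ)..1, (μ ^ 2 + ‖z₁ + l • (z₂ - z₁)‖ ^ 2) ^ (s / 2) * l) ∧
            (∫ l in (0 : ℝ)..1, (μ ^ 2 + ‖z₁ + l • (z₂ - z₁)‖ ^ 2) ^ (s / 2) * l) ≤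
              C * (μ ^ 2 + ‖z₁‖ ^ 2 + ‖z₂‖ ^ 2) ^ (s / 2) := by
  obtain ⟨C, hC, hbounds⟩ := stmt0_general s hs
  exact ⟨C, hC, fun μ _ z₁ z₂ h => hbounds _ μ z₁ z₂ (sq_add_sq_add_sq_pos_of_add_add_pos h)⟩
end

section
/- For every real t ≥ 2 and every positive integer N there exists a constant C = C(t, N) ≥ 1 such that for all μ ∈ [0,1] and all z₁, z₂ ∈ ℝ^N, one has C⁻¹ (μ² + |z₁|² + |z₂|²)^{(t−2)/2} |z₁ − z₂|² ≤ |V_{μ,t}(z₁) − V_{μ,t}(z₂)|² ≤ C (μ² + |z₁|² + |z₂|²)^{(t−2)/2} |z₁ − z₂|². -/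
/-! Write `V(z) = (μ² + |z|²) ^ p • z` with `p = (t - 2) / 4 ≥ 0`, and let `A`, `B` be the scalar
factors of `V(z)` and `V(w)`. Up to constants, `(μ² + |z|² + |w|²) ^ p` is `A + B`, and also
`max A B`. Since the factor increases with the norm, pairing `V(z) - V(w)` with `z - w` gives at
least `(A + B) / 2 * |z - w|²`, which is the lower bound. For the upper bound let `|w| ≤ |z|` and
split `V(z) - V(w) = A • (z - w) + (A - B) • w`; Bernoulli's inequality controls the second term
by `A * (|z| - |w|)`. -/

section RealPowers

open scoped NNReal

variable {p x y : ℝ}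

lemma rpow_add_one_sub_rpow_add_one_le (hp : 0 ≤ p) (hx : 0 < x) (hy : 0 ≤ y) :
    x ^ (p + 1) - y ^ (p + 1) ≤ (p + 1) * x ^ p * (x - y) := by
  have bernoulli : 1 + (p + 1) * (y / x - 1) ≤ (y / x) ^ (p + 1) := by
    have hs : -1 ≤ y / x - 1 := by linarith [div_nonneg hy hx.le]
    simpa only [add_sub_cancel] using
      one_add_mul_self_le_rpow_one_add hs (le_add_of_nonneg_left hp)
  rw [Real.div_rpow hy hx.le, le_div_iff₀ (by positivity)] at bernoulli
  have hxp : x ^ (p + 1) = x ^ p * x := Real.rpow_add_one hx.ne' p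
  have expand : (1 + (p + 1) * (y / x - 1)) * x ^ (p + 1) =
      x ^ (p + 1) - (p + 1) * x ^ p * (x - y) := by
    rw [hxp]
    field_simp
    ring
  linarith

lemma mul_rpow_sub_rpow_le (hp : 0 ≤ p) (hy : 0 ≤ y) (hyx : y ≤ x) :
    x * (x ^ p - y ^ p) ≤ (p + 1) * x ^ p * (x - y) := by
  rcases (hy.trans hyx).eq_or_lt with rfl | hx
  · simp [le_antisymm hyx hy]
  calc x * (x ^ p - y ^ p)
      = x ^ (p + 1) - x * y ^ p := by rw [Real.rpow_add_one hx.ne']; ring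
    _ ≤ x ^ (p + 1) - y * y ^ p := by gcongr
    _ = x ^ (p + 1) - y ^ (p + 1) := by
        rw [Real.rpow_add_one' hy (by linarith), mul_comm y]
    _ ≤ (p + 1) * x ^ p * (x - y) := rpow_add_one_sub_rpow_add_one_le hp hx hy

lemma add_rpow_le_two_rpow_mul_rpow_add_rpow (hp : 0 ≤ p) (hx : 0 ≤ x) (hy : 0 ≤ y) :
    (x + y) ^ p ≤ 2 ^ p * (x ^ p + y ^ p) := by
  lift x to ℝ≥0 using hx
  lift y to ℝ≥0 using hy
  have h := ENNReal.add_rpow_le_two_rpow_mul_rpow_add_rpow x y hp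
  rw [← ENNReal.coe_ofNat] at h
  simp only [← ENNReal.coe_add, ← ENNReal.coe_rpow_of_nonneg _ hp] at h
  exact_mod_cast h

lemma rpow_add_sq_sub_mul_le {m a b : ℝ} (hp : 0 ≤ p) (hm : 0 ≤ m) (hb : 0 ≤ b) (hba : b ≤ a) :
    ((m + a ^ 2) ^ p - (m + b ^ 2) ^ p) * b ≤ 2 * (p + 1) * (m + a ^ 2) ^ p * (a - b) := by
  rcases (hb.trans hba).eq_or_lt with rfl | ha
  · simp [le_antisymm hba hb]
  have hx : 0 < m + a ^ 2 := by positivity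
  have hsq : (a + b) * b ≤ 2 * (m + a ^ 2) := by nlinarith
  have hdiff := mul_rpow_sub_rpow_le hp (by positivity : 0 ≤ m + b ^ 2)
    (by gcongr : m + b ^ 2 ≤ m + a ^ 2)
  refine le_of_mul_le_mul_left ?_ hx
  calc (m + a ^ 2) * (((m + a ^ 2) ^ p - (m + b ^ 2) ^ p) * b)
      = (m + a ^ 2) * ((m + a ^ 2) ^ p - (m + b ^ 2) ^ p) * b := by ring
    _ ≤ (p + 1) * (m + a ^ 2) ^ p * (m + a ^ 2 - (m + b ^ 2)) * b := by gcongr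
    _ = (p + 1) * (m + a ^ 2) ^ p * (a - b) * ((a + b) * b) := by ring
    _ ≤ (p + 1) * (m + a ^ 2) ^ p * (a - b) * (2 * (m + a ^ 2)) := by
        have := sub_nonneg.2 hba
        gcongr
    _ = (m + a ^ 2) * (2 * (p + 1) * (m + a ^ 2) ^ p * (a - b)) := by ring

end RealPowers

section InnerProductSpace

open scoped RealInnerProductSpace

variable {E : Type*} [NormedAddCommGroup E] [InnerProductSpace ℝ E]

lemma inner_smul_sub_smul_sub (a b : ℝ) (z w : E) :
    ⟪a • z - b • w, z - w⟫ =
      (a + b) / 2 * ‖z - w‖ ^ 2 + (a - b) * (‖z‖ ^ 2 - ‖w‖ ^ 2) / 2 := by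
  rw [norm_sub_sq_real]
  simp only [inner_sub_left, inner_sub_right, real_inner_smul_left,
    real_inner_self_eq_norm_sq, real_inner_comm z w]
  ring

lemma half_add_mul_norm_sub_le_norm_smul_sub_smul {a b : ℝ} {z w : E}
    (h : 0 ≤ (a - b) * (‖z‖ ^ 2 - ‖w‖ ^ 2)) :
    (a + b) / 2 * ‖z - w‖ ≤ ‖a • z - b • w‖ := by
  rcases (norm_nonneg (z - w)).eq_or_lt with hzw | hzw
  · simp [← hzw]
  refine le_of_mul_le_mul_right ?_ hzw
  calc (a + b) / 2 * ‖z - w‖ * ‖z - w‖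
      ≤ ⟪a • z - b • w, z - w⟫ := by rw [inner_smul_sub_smul_sub]; linarith
    _ ≤ ‖a • z - b • w‖ * ‖z - w‖ := real_inner_le_norm _ _

end InnerProductSpace

/-- The map `V_{μ,t}`, parametrised by its exponent: `V_{μ,t} = vMap μ ((t - 2) / 4)`. -/
noncomputable def vMap {E : Type*} [NormedAddCommGroup E] [NormedSpace ℝ E] (μ p : ℝ) (z : E) : E :=
  (μ ^ 2 + ‖z‖ ^ 2) ^ p • z

namespace vMap

lemma norm_sub_le {E : Type*} [NormedAddCommGroup E] [NormedSpace ℝ E] {p : ℝ} (hp : 0 ≤ p)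
    (μ : ℝ) (z w : E) :
    ‖vMap μ p z - vMap μ p w‖ ≤
      (2 * p + 3) * ((μ ^ 2 + ‖z‖ ^ 2 + ‖w‖ ^ 2) ^ p * ‖z - w‖) := by
  wlog hwz : ‖w‖ ≤ ‖z‖ generalizing z w
  · simpa only [norm_sub_rev, add_right_comm] using this w z (le_of_not_ge hwz)
  set A := (μ ^ 2 + ‖z‖ ^ 2) ^ p
  set B := (μ ^ 2 + ‖w‖ ^ 2) ^ p
  have hA : 0 ≤ A := by positivity
  have hBA : B ≤ A := Real.rpow_le_rpow (by positivity) (by gcongr) hp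
  have hAB : (A - B) * ‖w‖ ≤ 2 * (p + 1) * A * (‖z‖ - ‖w‖) :=
    rpow_add_sq_sub_mul_le hp (sq_nonneg μ) (norm_nonneg w) hwz
  have hAS : A ≤ (μ ^ 2 + ‖z‖ ^ 2 + ‖w‖ ^ 2) ^ p :=
    Real.rpow_le_rpow (by positivity) (le_add_of_nonneg_right (sq_nonneg _)) hp
  have split : vMap μ p z - vMap μ p w = A • (z - w) + (A - B) • w := by
    change A • z - B • w = _
    module
  calc ‖vMap μ p z - vMap μ p w‖
      ≤ ‖A • (z - w)‖ + ‖(A - B) • w‖ := split ▸ norm_add_le _ _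
    _ = A * ‖z - w‖ + (A - B) * ‖w‖ := by
        rw [norm_smul_of_nonneg hA, norm_smul_of_nonneg (sub_nonneg.2 hBA)]
    _ ≤ A * ‖z - w‖ + 2 * (p + 1) * A * (‖z‖ - ‖w‖) := by gcongr
    _ ≤ A * ‖z - w‖ + 2 * (p + 1) * A * ‖z - w‖ := by
        gcongr
        exact norm_sub_norm_le z w
    _ = (2 * p + 3) * (A * ‖z - w‖) := by ring
    _ ≤ (2 * p + 3) * ((μ ^ 2 + ‖z‖ ^ 2 + ‖w‖ ^ 2) ^ p * ‖z - w‖) := by gcongr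

variable {E : Type*} [NormedAddCommGroup E] [InnerProductSpace ℝ E] {p : ℝ}

lemma half_add_mul_norm_sub_le (hp : 0 ≤ p) (μ : ℝ) (z w : E) :
    ((μ ^ 2 + ‖z‖ ^ 2) ^ p + (μ ^ 2 + ‖w‖ ^ 2) ^ p) / 2 * ‖z - w‖ ≤
      ‖vMap μ p z - vMap μ p w‖ := by
  refine half_add_mul_norm_sub_le_norm_smul_sub_smul ?_
  rcases le_total (‖w‖ ^ 2) (‖z‖ ^ 2) with h | h
  · exact mul_nonneg (sub_nonneg.2 (by gcongr)) (sub_nonneg.2 h)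
  · exact mul_nonneg_of_nonpos_of_nonpos (sub_nonpos.2 (by gcongr)) (sub_nonpos.2 h)

lemma mul_norm_sub_le (hp : 0 ≤ p) (μ : ℝ) (z w : E) :
    (μ ^ 2 + ‖z‖ ^ 2 + ‖w‖ ^ 2) ^ p * ‖z - w‖ ≤
      2 * 2 ^ p * ‖vMap μ p z - vMap μ p w‖ := by
  have hsum : (μ ^ 2 + ‖z‖ ^ 2 + ‖w‖ ^ 2) ^ p ≤
      2 ^ p * ((μ ^ 2 + ‖z‖ ^ 2) ^ p + (μ ^ 2 + ‖w‖ ^ 2) ^ p) :=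
    calc (μ ^ 2 + ‖z‖ ^ 2 + ‖w‖ ^ 2) ^ p
        ≤ ((μ ^ 2 + ‖z‖ ^ 2) + (μ ^ 2 + ‖w‖ ^ 2)) ^ p := by
          gcongr
          exact le_add_of_nonneg_left (sq_nonneg μ)
      _ ≤ _ := add_rpow_le_two_rpow_mul_rpow_add_rpow hp (by positivity) (by positivity)
  calc (μ ^ 2 + ‖z‖ ^ 2 + ‖w‖ ^ 2) ^ p * ‖z - w‖
      ≤ 2 ^ p * ((μ ^ 2 + ‖z‖ ^ 2) ^ p + (μ ^ 2 + ‖w‖ ^ 2) ^ p) * ‖z - w‖ := by gcongr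
    _ = 2 * 2 ^ p *
          (((μ ^ 2 + ‖z‖ ^ 2) ^ p + (μ ^ 2 + ‖w‖ ^ 2) ^ p) / 2 * ‖z - w‖) := by ring
    _ ≤ 2 * 2 ^ p * ‖vMap μ p z - vMap μ p w‖ := by
        gcongr
        exact half_add_mul_norm_sub_le hp μ z w

end vMap

lemma inv_sq_mul_sq_le_and_sq_le {K X Y : ℝ} (hK : 0 < K) (hX : 0 ≤ X) (hY : 0 ≤ Y)
    (hXY : X ≤ K * Y) (hYX : Y ≤ K * X) :
    (K ^ 2)⁻¹ * X ^ 2 ≤ Y ^ 2 ∧ Y ^ 2 ≤ K ^ 2 * X ^ 2 := by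
  rw [inv_mul_le_iff₀ (by positivity), ← mul_pow, ← mul_pow]
  exact ⟨by gcongr, by gcongr⟩

theorem stmt1_general (t : ℝ) (ht : 2 ≤ t) :
    ∃ C : ℝ, 1 ≤ C ∧
      ∀ (E : Type*) [NormedAddCommGroup E] [InnerProductSpace ℝ E] (μ : ℝ) (z₁ z₂ : E),
        C⁻¹ * ((μ ^ 2 + ‖z₁‖ ^ 2 + ‖z₂‖ ^ 2) ^ ((t - 2) / 2) * ‖z₁ - z₂‖ ^ 2) ≤
            ‖vMap μ ((t - 2) / 4) z₁ - vMap μ ((t - 2) / 4) z₂‖ ^ 2 ∧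
          ‖vMap μ ((t - 2) / 4) z₁ - vMap μ ((t - 2) / 4) z₂‖ ^ 2 ≤
            C * ((μ ^ 2 + ‖z₁‖ ^ 2 + ‖z₂‖ ^ 2) ^ ((t - 2) / 2) * ‖z₁ - z₂‖ ^ 2) := by
  have hp : 0 ≤ (t - 2) / 4 := by linarith
  have h_exp : (t - 2) / 2 = (t - 2) / 4 * (2 : ℕ) := by push_cast; ring
  rw [h_exp]
  generalize (t - 2) / 4 = p at hp ⊢
  have hK : 1 ≤ max (2 * 2 ^ p) (2 * p + 3) := le_max_of_le_right (by linarith)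
  refine ⟨max (2 * 2 ^ p) (2 * p + 3) ^ 2, one_le_pow₀ hK, fun E _ _ μ z w => ?_⟩
  rw [Real.rpow_mul_natCast (by positivity), ← mul_pow]
  apply inv_sq_mul_sq_le_and_sq_le (by positivity) (by positivity) (norm_nonneg _)
  · exact (vMap.mul_norm_sub_le hp μ z w).trans (by gcongr; exact le_max_left _ _)
  · exact (vMap.norm_sub_le hp μ z w).trans (by gcongr; exact le_max_right _ _)

/-- two-sided bound for `|V_{μ,t}(z₁) − V_{μ,t}(z₂)|²`, where
`V_{μ,t}(z) = (μ² + |z|²)^{(t−2)/4} z`. -/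
theorem stmt1 (t : ℝ) (ht : 2 ≤ t) (N : ℕ) (hN : 0 < N) :
    ∃ C : ℝ, 1 ≤ C ∧
      ∀ μ : ℝ, μ ∈ Set.Icc (0 : ℝ) 1 →
        ∀ z₁ z₂ : EuclideanSpace ℝ (Fin N),
          C⁻¹ * ((μ ^ 2 + ‖z₁‖ ^ 2 + ‖z₂‖ ^ 2) ^ ((t - 2) / 2) * ‖z₁ - z₂‖ ^ 2) ≤
              ‖((μ ^ 2 + ‖z₁‖ ^ 2) ^ ((t - 2) / 4)) • z₁ -
                  ((μ ^ 2 + ‖z₂‖ ^ 2) ^ ((t - 2) / 4)) • z₂‖ ^ 2 ∧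
            ‖((μ ^ 2 + ‖z₁‖ ^ 2) ^ ((t - 2) / 4)) • z₁ -
                ((μ ^ 2 + ‖z₂‖ ^ 2) ^ ((t - 2) / 4)) • z₂‖ ^ 2 ≤
              C * ((μ ^ 2 + ‖z₁‖ ^ 2 + ‖z₂‖ ^ 2) ^ ((t - 2) / 2) * ‖z₁ - z₂‖ ^ 2) := by
  obtain ⟨C, hC, bounds⟩ := stmt1_general t ht
  exact ⟨C, hC, fun μ _ => bounds _ μ⟩
end

section
/- For every real p ≥ 2 and every positive integer N there exists a constant c = c(p, N) > 0 such that for all μ ≥ 0 and all z, w ∈ ℝ^N, one has (μ² + |z|²)^{p/2} − (μ² + |w|²)^{p/2} − p (μ² + |w|²)^{(p−2)/2} ⟨w, z − w⟩ ≥ c (μ² + |z|² + |w|²)^{(p−2)/2} |z − w|². -/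
/-! Put `q = p / 2`, `A = μ² + |z|²`, `B = μ² + |w|²` and `D = |z - w|²`. Since
`2⟨w, z - w⟩ = A - B - D`, the left-hand side is the Bregman divergence of `t ↦ t ^ q` from `B` to
`A` plus `q * B ^ (q - 1) * D`, while `D ≤ 2 * (A + B)`. If `A ≤ 3 * B`, then `B` is comparable to
`A + B` and the second term suffices. If `3 * B ≤ A`, then `D` is at most a multiple of `A - B`,
and following the tangents at `B` and at the midpoint of `A` and `B` bounds the divergence below by
`q / 2 * (((A + B) / 2) ^ (q - 1) - B ^ (q - 1)) * (A - B)`; the negative part is absorbed by the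
second term. -/

section RealPower

variable {q a b : ℝ}

theorem two_rpow_add_two_eq (p : ℝ) : (2 : ℝ) ^ (p + 2) = 16 * 4 ^ (p / 2 - 1) := by
  rw [show (4 : ℝ) = 2 ^ (2 : ℝ) by norm_num, show (16 : ℝ) = 2 ^ (4 : ℝ) by norm_num,
    ← Real.rpow_mul zero_le_two, ← Real.rpow_add zero_lt_two]
  ring_nf

theorem rpow_add_mul_rpow_sub_one_mul_sub_le_rpow (hq : 1 ≤ q) (ha : 0 ≤ a) (hb : 0 ≤ b) :
    b ^ q + q * b ^ (q - 1) * (a - b) ≤ a ^ q := by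
  have hq0 : 0 < q := by linarith
  have young : a * b ^ (q - 1) ≤ q⁻¹ * a ^ q + (q - 1) / q * b ^ q := by
    have amgm := Real.geom_mean_le_arith_mean2_weighted (inv_nonneg.2 hq0.le)
      (div_nonneg (sub_nonneg.2 hq) hq0.le) (Real.rpow_nonneg ha q) (Real.rpow_nonneg hb q)
      (by field_simp; ring)
    rwa [Real.rpow_rpow_inv ha hq0.ne', ← Real.rpow_mul hb, mul_div_cancel₀ _ hq0.ne'] at amgm
  have split : b ^ q = b * b ^ (q - 1) := by
    rw [← Real.rpow_one_add' hb (by linarith), add_sub_cancel]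
  calc b ^ q + q * b ^ (q - 1) * (a - b)
      = q * (a * b ^ (q - 1)) - (q - 1) * b ^ q := by rw [split]; ring
    _ ≤ q * (q⁻¹ * a ^ q + (q - 1) / q * b ^ q) - (q - 1) * b ^ q := by gcongr
    _ = a ^ q := by field_simp; ring

theorem mul_midpoint_rpow_sub_rpow_mul_sub_le (hq : 1 ≤ q) (ha : 0 ≤ a) (hb : 0 ≤ b) :
    q / 2 * (((a + b) / 2) ^ (q - 1) - b ^ (q - 1)) * (a - b) ≤
      a ^ q - b ^ q - q * b ^ (q - 1) * (a - b) := by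
  have hm : 0 ≤ (a + b) / 2 := by positivity
  have tangent_mid := rpow_add_mul_rpow_sub_one_mul_sub_le_rpow hq ha hm
  have tangent_left := rpow_add_mul_rpow_sub_one_mul_sub_le_rpow hq hm hb
  linarith

theorem mul_add_rpow_mul_le_rpow_sub_rpow_sub {d : ℝ} (hq : 1 ≤ q) (ha : 0 ≤ a) (hb : 0 ≤ b)
    (hd : 0 ≤ d) (hdab : d ≤ 2 * (a + b)) :
    q / (8 * 4 ^ (q - 1)) * (a + b) ^ (q - 1) * d ≤
      a ^ q - b ^ q - q * b ^ (q - 1) * (a - b - d) := by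
  have : 0 ≤ q - 1 := sub_nonneg.2 hq
  have coeff : q / (8 * 4 ^ (q - 1)) * (a + b) ^ (q - 1) * d =
      q / 8 * ((a + b) / 4) ^ (q - 1) * d := by
    rw [Real.div_rpow (by positivity) (by norm_num)]
    field_simp
  rw [coeff]
  rcases le_total a (3 * b) with hab | hab
  · have tangent := rpow_add_mul_rpow_sub_one_mul_sub_le_rpow hq ha hb
    calc q / 8 * ((a + b) / 4) ^ (q - 1) * d
        ≤ q * b ^ (q - 1) * d := by gcongr <;> linarith
      _ ≤ a ^ q - b ^ q - q * b ^ (q - 1) * (a - b - d) := by linarith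
  · have hdist : d / 4 ≤ a - b := by linarith
    have hpow : b ^ (q - 1) ≤ ((a + b) / 2) ^ (q - 1) := by gcongr; linarith
    have bregman := mul_midpoint_rpow_sub_rpow_mul_sub_le hq ha hb
    have hbd : 0 ≤ q * b ^ (q - 1) * d := by positivity
    calc q / 8 * ((a + b) / 4) ^ (q - 1) * d
        ≤ q / 8 * ((a + b) / 2) ^ (q - 1) * d := by gcongr; norm_num
      _ ≤ q / 2 * (((a + b) / 2) ^ (q - 1) - b ^ (q - 1)) * (d / 4) +
            q * b ^ (q - 1) * d := by linarith
      _ ≤ q / 2 * (((a + b) / 2) ^ (q - 1) - b ^ (q - 1)) * (a - b) +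
            q * b ^ (q - 1) * d := by
          have := sub_nonneg.2 hpow
          gcongr
      _ ≤ a ^ q - b ^ q - q * b ^ (q - 1) * (a - b - d) := by linarith

end RealPower

section InnerProductSpace

variable {E : Type*} [NormedAddCommGroup E] [InnerProductSpace ℝ E]

theorem norm_sub_sq_le_two_mul_add (z w : E) : ‖z - w‖ ^ 2 ≤ 2 * (‖z‖ ^ 2 + ‖w‖ ^ 2) := by
  linarith [parallelogram_law_with_norm ℝ z w, mul_self_nonneg ‖z + w‖]

theorem two_mul_inner_sub_right (z w : E) :
    2 * inner ℝ w (z - w) = ‖z‖ ^ 2 - ‖w‖ ^ 2 - ‖z - w‖ ^ 2 := by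
  have expand := norm_add_sq_real w (z - w)
  rw [add_sub_cancel] at expand
  linarith

theorem stmt2_general {p : ℝ} (hp : 2 ≤ p) (μ : ℝ) (z w : E) :
    p / 2 ^ (p + 2) * (μ ^ 2 + ‖z‖ ^ 2 + ‖w‖ ^ 2) ^ ((p - 2) / 2) * ‖z - w‖ ^ 2 ≤
      (μ ^ 2 + ‖z‖ ^ 2) ^ (p / 2) - (μ ^ 2 + ‖w‖ ^ 2) ^ (p / 2) -
        p * (μ ^ 2 + ‖w‖ ^ 2) ^ ((p - 2) / 2) * inner ℝ w (z - w) := by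
  set a := μ ^ 2 + ‖z‖ ^ 2
  set b := μ ^ 2 + ‖w‖ ^ 2
  have exponent : (p - 2) / 2 = p / 2 - 1 := by ring
  have constant : p / 2 ^ (p + 2) = p / 2 / (8 * 4 ^ (p / 2 - 1)) := by
    rw [two_rpow_add_two_eq]
    ring
  have hdist : ‖z - w‖ ^ 2 ≤ 2 * (a + b) := by
    linarith [norm_sub_sq_le_two_mul_add z w, sq_nonneg μ]
  have hinner : a - b - ‖z - w‖ ^ 2 = 2 * inner ℝ w (z - w) := by
    linarith [two_mul_inner_sub_right z w]
  rw [exponent, constant]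
  calc p / 2 / (8 * 4 ^ (p / 2 - 1)) * (a + ‖w‖ ^ 2) ^ (p / 2 - 1) * ‖z - w‖ ^ 2
      ≤ p / 2 / (8 * 4 ^ (p / 2 - 1)) * (a + b) ^ (p / 2 - 1) * ‖z - w‖ ^ 2 := by
        gcongr
        · linarith
        · linarith [sq_nonneg μ]
    _ ≤ a ^ (p / 2) - b ^ (p / 2) - p / 2 * b ^ (p / 2 - 1) * (a - b - ‖z - w‖ ^ 2) :=
        mul_add_rpow_mul_le_rpow_sub_rpow_sub (by linarith) (by positivity) (by positivity)
          (by positivity) hdist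
    _ = a ^ (p / 2) - b ^ (p / 2) - p * b ^ (p / 2 - 1) * inner ℝ w (z - w) := by
        rw [hinner]
        ring

end InnerProductSpace

/-- strong monotonicity of `z ↦ (μ² + |z|²)^{p/2}` for `p ≥ 2`. -/
theorem stmt2 (p : ℝ) (hp : 2 ≤ p) (N : ℕ) (hN : 0 < N) :
    ∃ c : ℝ, 0 < c ∧
      ∀ μ : ℝ, 0 ≤ μ → ∀ z w : EuclideanSpace ℝ (Fin N),
        (μ ^ 2 + ‖z‖ ^ 2) ^ (p / 2) - (μ ^ 2 + ‖w‖ ^ 2) ^ (p / 2) -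
            p * (μ ^ 2 + ‖w‖ ^ 2) ^ ((p - 2) / 2) * (inner ℝ w (z - w) : ℝ) ≥
          c * (μ ^ 2 + ‖z‖ ^ 2 + ‖w‖ ^ 2) ^ ((p - 2) / 2) * ‖z - w‖ ^ 2 :=
  ⟨p / 2 ^ (p + 2), by positivity, fun μ _ z w => stmt2_general hp μ z w⟩
end

section
/- Let p ≥ 2 be real, μ ∈ [0,1], λ > 0, m a positive integer, and let F : ℝ^m → ℝ be differentiable and satisfy condition (H1), i.e. the map z ↦ F(z) − λ (μ² + |z|²)^{p/2} is convex on ℝ^m. Then there exists a constant c = c(p, m) > 0, independent of F, λ and μ, such that for all z, w ∈ ℝ^m, F(z) − F(w) − ⟨∇F(w), z − w⟩ ≥ c λ (μ² + |z|² + |w|²)^{(p−2)/2} |z − w|². -/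
/-!
Subtracting its tangent at `w` from the convex function `F - lam * G`, where
`G x = (μ² + ‖x‖²) ^ q` and `q = p / 2`, bounds the first-order gap of `F` below by `lam` times
that of `G`. With `a = μ² + ‖w‖²`, `b = μ² + ‖z‖²` and `d = ‖z - w‖²`, polarization gives
`2⟪w, z - w⟫ = b - a - d`, so the gap of `G` is the one-variable expression
`b ^ q - a ^ q - q a ^ (q - 1) (b - a - d)`. If `b ≤ 3 a`, the term `q a ^ (q - 1) d` alone is large
enough. If `3 a ≤ b`, then `d ≤ 2 (a + b) ≤ 4 (b - a)`, and the gap of `t ↦ t ^ q` between `a` and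
`b`, measured through the midpoint, takes over.
-/

open Set

open scoped RealInnerProductSpace

theorem add_le_of_convexOn_of_hasLineDerivWithinAt {E : Type*} [AddCommGroup E] [Module ℝ E]
    {s : Set E} {f : E → ℝ} {f' : ℝ} {x y : E} (hf : ConvexOn ℝ s f) (hx : x ∈ s) (hy : y ∈ s)
    (hf' : HasLineDerivWithinAt ℝ f f' s x (y - x)) : f x + f' ≤ f y := by
  let L : ℝ →ᵃ[ℝ] E := AffineMap.lineMap x y
  have hL : (fun t : ℝ => x + t • (y - x)) = L := by
    funext t
    simp only [L, AffineMap.lineMap_apply, vsub_eq_sub, vadd_eq_add, add_comm]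
  have hderiv : HasDerivWithinAt (f ∘ L) f' (L ⁻¹' s) 0 := by
    rw [← hL]
    exact hf'
  have hslope : f' ≤ slope (f ∘ L) 0 1 :=
    (hf.comp_affineMap L).le_slope_of_hasDerivWithinAt (by simpa [L] using hx)
      (by simpa [L] using hy) one_pos hderiv
  have hslope_eq : slope (f ∘ L) 0 1 = f y - f x := by simp [slope_def_field, L]
  linarith

section Rpow

variable {q a b d : ℝ}

theorem rpow_add_mul_rpow_sub_one_mul_sub_le (hq : 1 ≤ q) (ha : 0 ≤ a) (hb : 0 ≤ b) :
    a ^ q + q * a ^ (q - 1) * (b - a) ≤ b ^ q := by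
  refine add_le_of_convexOn_of_hasLineDerivWithinAt (convexOn_rpow hq) (mem_Ici.2 ha)
    (mem_Ici.2 hb) ?_
  have hderiv : HasDerivAt (fun t : ℝ => t ^ q) (q * a ^ (q - 1)) a :=
    Real.hasDerivAt_rpow_const (Or.inr hq)
  simpa [mul_comm] using hderiv.hasFDerivAt.hasFDerivWithinAt.hasLineDerivWithinAt (b - a)

theorem mul_rpow_midpoint_sub_rpow_le (hq : 1 ≤ q) (ha : 0 ≤ a) (hb : 0 ≤ b) :
    q * (((a + b) / 2) ^ (q - 1) - a ^ (q - 1)) * ((b - a) / 2) ≤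
      b ^ q - a ^ q - q * a ^ (q - 1) * (b - a) := by
  have hmid : 0 ≤ (a + b) / 2 := by positivity
  have tangent_left := rpow_add_mul_rpow_sub_one_mul_sub_le hq ha hmid
  have tangent_mid := rpow_add_mul_rpow_sub_one_mul_sub_le hq hmid hb
  linarith

theorem rpow_sub_one_mul_le_of_le_three_mul (hq : 1 ≤ q) (hb : 0 ≤ b) (hd : 0 ≤ d)
    (hab : b ≤ 3 * a) :
    ((a + b) / 4) ^ (q - 1) * d ≤ b ^ q - a ^ q - q * a ^ (q - 1) * (b - a - d) := by
  have ha : 0 ≤ a := by linarith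
  have hmono : ((a + b) / 4) ^ (q - 1) ≤ a ^ (q - 1) :=
    Real.rpow_le_rpow (by positivity) (by linarith) (by linarith)
  have tangent := rpow_add_mul_rpow_sub_one_mul_sub_le hq ha hb
  calc ((a + b) / 4) ^ (q - 1) * d ≤ 1 * a ^ (q - 1) * d := by rw [one_mul]; gcongr
    _ ≤ q * a ^ (q - 1) * d := by gcongr
    _ ≤ b ^ q - a ^ q - q * a ^ (q - 1) * (b - a - d) := by linarith

theorem rpow_sub_one_mul_le_of_three_mul_le (hq : 1 ≤ q) (ha : 0 ≤ a) (hd : 0 ≤ d)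
    (hab : 3 * a ≤ b) (hdab : d ≤ 2 * (a + b)) :
    ((a + b) / 2) ^ (q - 1) * (d / 8) ≤ b ^ q - a ^ q - q * a ^ (q - 1) * (b - a - d) := by
  have hb : 0 ≤ b := by linarith
  set A := a ^ (q - 1)
  set M := ((a + b) / 2) ^ (q - 1)
  have hAM : 0 ≤ M - A :=
    sub_nonneg.2 (Real.rpow_le_rpow ha (by linarith) (by linarith))
  calc M * (d / 8) = 1 * (M * (d / 8)) := (one_mul _).symm
    _ ≤ q * (M * (d / 8)) := by gcongr
    _ = q * (M - A) * (d / 8) + q * A * (d / 8) := by ring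
    _ ≤ q * (M - A) * ((b - a) / 2) + q * A * d := by
      gcongr q * (M - A) * ?_ + q * A * ?_ <;> linarith
    _ ≤ b ^ q - a ^ q - q * A * (b - a) + q * A * d := by
      gcongr
      exact mul_rpow_midpoint_sub_rpow_le hq ha hb
    _ = b ^ q - a ^ q - q * A * (b - a - d) := by ring

theorem rpow_add_div_four_mul_le (hq : 1 ≤ q) (ha : 0 ≤ a) (hb : 0 ≤ b) (hd : 0 ≤ d)
    (hdab : d ≤ 2 * (a + b)) :
    ((a + b) / 4) ^ (q - 1) * (d / 8) ≤ b ^ q - a ^ q - q * a ^ (q - 1) * (b - a - d) := by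
  rcases le_total b (3 * a) with hab | hab
  · calc ((a + b) / 4) ^ (q - 1) * (d / 8) ≤ ((a + b) / 4) ^ (q - 1) * d := by
          gcongr
          linarith
      _ ≤ _ := rpow_sub_one_mul_le_of_le_three_mul hq hb hd hab
  · calc ((a + b) / 4) ^ (q - 1) * (d / 8) ≤ ((a + b) / 2) ^ (q - 1) * (d / 8) := by
          gcongr
          norm_num
      _ ≤ _ := rpow_sub_one_mul_le_of_three_mul_le hq ha hd hab hdab

end Rpow

section InnerProductSpace

variable {E : Type*} [NormedAddCommGroup E] [InnerProductSpace ℝ E] {q : ℝ}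

theorem hasLineDerivAt_sq_add_norm_sq_rpow (hq : 1 ≤ q) (μ : ℝ) (w v : E) :
    HasLineDerivAt ℝ (fun x : E => (μ ^ 2 + ‖x‖ ^ 2) ^ q)
      (q * (μ ^ 2 + ‖w‖ ^ 2) ^ (q - 1) * (2 * ⟪w, v⟫)) w v := by
  have hnorm : HasFDerivAt (fun x : E => μ ^ 2 + ‖x‖ ^ 2) (2 • innerSL ℝ w) w :=
    (hasStrictFDerivAt_norm_sq w).hasFDerivAt.const_add (μ ^ 2)
  simpa using (hnorm.rpow_const (Or.inr hq)).hasLineDerivAt v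

theorem sq_add_norm_sq_add_norm_sq_rpow_mul_le (hq : 1 ≤ q) (μ : ℝ) (z w : E) :
    (1 / 4) ^ (q - 1) / 8 * (μ ^ 2 + ‖z‖ ^ 2 + ‖w‖ ^ 2) ^ (q - 1) * ‖z - w‖ ^ 2 ≤
      (μ ^ 2 + ‖z‖ ^ 2) ^ q - (μ ^ 2 + ‖w‖ ^ 2) ^ q -
        q * (μ ^ 2 + ‖w‖ ^ 2) ^ (q - 1) * (2 * ⟪w, z - w⟫) := by
  set a := μ ^ 2 + ‖w‖ ^ 2 with ha
  set b := μ ^ 2 + ‖z‖ ^ 2 with hb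
  set d := ‖z - w‖ ^ 2 with hd
  have hpolar : 2 * ⟪w, z - w⟫ = b - a - d := by
    rw [ha, hb, hd, norm_sub_sq_real, inner_sub_right, real_inner_self_eq_norm_sq,
      real_inner_comm]
    ring
  have hdab : d ≤ 2 * (a + b) := by
    have hparallelogram := parallelogram_law_with_norm ℝ z w
    nlinarith [sq_nonneg μ, sq_nonneg ‖z + w‖]
  have hsum : b + ‖w‖ ^ 2 ≤ a + b := by linarith [sq_nonneg μ]
  calc (1 / 4) ^ (q - 1) / 8 * (b + ‖w‖ ^ 2) ^ (q - 1) * d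
      ≤ (1 / 4) ^ (q - 1) / 8 * (a + b) ^ (q - 1) * d := by gcongr
    _ = ((a + b) / 4) ^ (q - 1) * (d / 8) := by
      rw [div_eq_mul_one_div (a + b), Real.mul_rpow (by positivity) (by norm_num)]
      ring
    _ ≤ b ^ q - a ^ q - q * a ^ (q - 1) * (b - a - d) :=
      rpow_add_div_four_mul_le hq (by positivity) (by positivity) (by positivity) hdab
    _ = _ := by rw [hpolar]

theorem stmt3_general {p μ lam F' : ℝ} (hp : 2 ≤ p) (hlam : 0 ≤ lam) {s : Set E} {F : E → ℝ}
    (hF : ConvexOn ℝ s fun x => F x - lam * (μ ^ 2 + ‖x‖ ^ 2) ^ (p / 2)) {z w : E} (hz : z ∈ s)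
    (hw : w ∈ s) (hF' : HasLineDerivWithinAt ℝ F F' s w (z - w)) :
    (1 / 4) ^ ((p - 2) / 2) / 8 * lam * (μ ^ 2 + ‖z‖ ^ 2 + ‖w‖ ^ 2) ^ ((p - 2) / 2) *
      ‖z - w‖ ^ 2 ≤ F z - F w - F' := by
  have hq : 1 ≤ p / 2 := by linarith
  have hG := (hasLineDerivAt_sq_add_norm_sq_rpow hq μ w (z - w)).hasLineDerivWithinAt s
  have tangent := add_le_of_convexOn_of_hasLineDerivWithinAt hF hw hz
    (HasDerivWithinAt.sub hF' (HasDerivWithinAt.const_mul lam hG))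
  have hgap := mul_le_mul_of_nonneg_left (sq_add_norm_sq_add_norm_sq_rpow_mul_le hq μ z w) hlam
  rw [show (p - 2) / 2 = p / 2 - 1 by ring]
  linarith

end InnerProductSpace

/-- condition (H1) implies the strong monotonicity inequality (H4). -/
theorem stmt3 (p : ℝ) (hp : 2 ≤ p) (m : ℕ) (hm : 0 < m) :
    ∃ c : ℝ, 0 < c ∧
      ∀ (μ lam : ℝ), μ ∈ Set.Icc (0 : ℝ) 1 → 0 < lam →
        ∀ F : EuclideanSpace ℝ (Fin m) → ℝ, Differentiable ℝ F →
          ConvexOn ℝ Set.univ (fun z => F z - lam * (μ ^ 2 + ‖z‖ ^ 2) ^ (p / 2)) →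
          ∀ z w : EuclideanSpace ℝ (Fin m),
            F z - F w - (inner ℝ (gradient F w) (z - w) : ℝ) ≥
              c * lam * (μ ^ 2 + ‖z‖ ^ 2 + ‖w‖ ^ 2) ^ ((p - 2) / 2) * ‖z - w‖ ^ 2 :=
  ⟨(1 / 4) ^ ((p - 2) / 2) / 8, by positivity, fun _ _ _ hlam _ hF hconv z w =>
    stmt3_general hp hlam.le hconv (mem_univ z) (mem_univ w)
      ((hF w).hasGradientAt.hasFDerivAt.hasFDerivWithinAt.hasLineDerivWithinAt (z - w))⟩
end

section
/- Let p ≥ 2 be real, μ ∈ [0,1], λ > 0, m a positive integer, and let F : ℝ^m → ℝ be differentiable and satisfy condition (H1), i.e. the map z ↦ F(z) − λ (μ² + |z|²)^{p/2} is convex on ℝ^m. Then there exists a constant C ≥ 0 such that F(z) ≥ (λ/2) |z|^p − C for all z ∈ ℝ^m. -/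
/-!
The convex function `G z = F z - λ (μ² + |z|²)^{p/2}` has an affine minorant, so it decreases at
most linearly, while the subtracted term is at least `λ |z|^p`. Since `p > 1`, Young's inequality
absorbs the linear loss into an arbitrarily small multiple of `|z|^p`.
-/

lemma exists_mul_le_mul_rpow_add {p ε : ℝ} (hp : 1 < p) (hε : 0 < ε) (a : ℝ) :
    ∃ C : ℝ, ∀ t : ℝ, 0 ≤ t → a * t ≤ ε * t ^ p + C := by
  have hp₀ : 0 < p := zero_lt_one.trans hp
  -- `δ` is chosen so that the first term of Young's bound for `(δ t) (a / δ)` is exactly `ε t ^ p`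
  set δ : ℝ := (ε * p) ^ p⁻¹
  have hδ : 0 < δ := by positivity
  have hδp : δ ^ p = ε * p := Real.rpow_inv_rpow (by positivity) hp₀.ne'
  refine ⟨|a / δ| ^ p.conjExponent / p.conjExponent, fun t ht ↦ ?_⟩
  calc a * t = (δ * t) * (a / δ) := by field_simp
    _ ≤ |δ * t| ^ p / p + |a / δ| ^ p.conjExponent / p.conjExponent :=
      Real.young_inequality _ _ (.conjExponent hp)
    _ = ε * t ^ p + |a / δ| ^ p.conjExponent / p.conjExponent := by
      rw [abs_of_nonneg (by positivity), Real.mul_rpow hδ.le ht, hδp]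
      field_simp

lemma rpow_le_sq_add_sq_rpow_half {p t : ℝ} (hp : 0 ≤ p) (ht : 0 ≤ t) (μ : ℝ) :
    t ^ p ≤ (μ ^ 2 + t ^ 2) ^ (p / 2) :=
  calc t ^ p = (t ^ 2) ^ (p / 2) := by
        rw [← Real.rpow_natCast_mul ht, Nat.cast_ofNat, mul_div_cancel₀ p two_ne_zero]
    _ ≤ (μ ^ 2 + t ^ 2) ^ (p / 2) := by
        gcongr
        exact le_add_of_nonneg_left (sq_nonneg μ)

lemma lowerSemicontinuous_sub_mul_sq_add_sq_rpow {E : Type*} [SeminormedAddCommGroup E]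
    {F : E → ℝ} (hF : LowerSemicontinuous F) {q : ℝ} (hq : 0 ≤ q) (μ lam : ℝ) :
    LowerSemicontinuous fun z ↦ F z - lam * (μ ^ 2 + ‖z‖ ^ 2) ^ q := by
  have hcont : Continuous fun z : E ↦ -(lam * (μ ^ 2 + ‖z‖ ^ 2) ^ q) := by
    fun_prop (disch := exact hq)
  simpa only [sub_eq_add_neg] using hF.add hcont.lowerSemicontinuous

section SeminormedSpace

variable {E : Type*} [SeminormedAddCommGroup E] [NormedSpace ℝ E]

lemma exists_sub_mul_norm_le_of_convexOn {G : E → ℝ} (hG : LowerSemicontinuous G)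
    (hconv : ConvexOn ℝ Set.univ G) : ∃ a c : ℝ, ∀ z, c - a * ‖z‖ ≤ G z := by
  obtain ⟨l, c, hlc, -⟩ := hconv.exists_affine_le_of_lt (𝕜 := ℝ) (Set.mem_univ 0)
    (sub_one_lt (G 0)) isClosed_univ (lowerSemicontinuousOn_univ_iff.2 hG)
  refine ⟨‖l‖, c, fun z ↦ ?_⟩
  have hminorant : l z + c ≤ G z := hlc ⟨z, Set.mem_univ z⟩
  have hnorm : -(‖l‖ * ‖z‖) ≤ l z := neg_le_of_abs_le (l.le_opNorm z)
  linarith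

theorem stmt4_general {p κ lam : ℝ} (hp : 1 < p) (hlam : 0 ≤ lam) (hκ : κ < lam) (μ : ℝ)
    {F : E → ℝ} (hF : LowerSemicontinuous F)
    (hconv : ConvexOn ℝ Set.univ fun z ↦ F z - lam * (μ ^ 2 + ‖z‖ ^ 2) ^ (p / 2)) :
    ∃ C : ℝ, 0 ≤ C ∧ ∀ z, F z ≥ κ * ‖z‖ ^ p - C := by
  have hp₀ : 0 ≤ p := zero_le_one.trans hp.le
  obtain ⟨a, c, hlinear⟩ := exists_sub_mul_norm_le_of_convexOn
    (lowerSemicontinuous_sub_mul_sq_add_sq_rpow hF (div_nonneg hp₀ zero_le_two) μ lam) hconv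
  obtain ⟨D, hyoung⟩ := exists_mul_le_mul_rpow_add hp (sub_pos.2 hκ) a
  refine ⟨max (D - c) 0, le_max_right _ _, fun z ↦ ?_⟩
  have hpow : lam * ‖z‖ ^ p ≤ lam * (μ ^ 2 + ‖z‖ ^ 2) ^ (p / 2) :=
    mul_le_mul_of_nonneg_left (rpow_le_sq_add_sq_rpow_half hp₀ (norm_nonneg z) μ) hlam
  linarith [hlinear z, hyoung ‖z‖ (norm_nonneg z), le_max_left (D - c) 0]

end SeminormedSpace

/-- condition (H1) implies the coercivity bound (H5). -/
theorem stmt4 (p : ℝ) (hp : 2 ≤ p) (μ lam : ℝ) (hμ : μ ∈ Set.Icc (0 : ℝ) 1)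
    (hlam : 0 < lam) (m : ℕ) (hm : 0 < m)
    (F : EuclideanSpace ℝ (Fin m) → ℝ) (hF : Differentiable ℝ F)
    (hconv : ConvexOn ℝ Set.univ (fun z => F z - lam * (μ ^ 2 + ‖z‖ ^ 2) ^ (p / 2))) :
    ∃ C : ℝ, 0 ≤ C ∧ ∀ z : EuclideanSpace ℝ (Fin m), F z ≥ lam / 2 * ‖z‖ ^ p - C :=
  stmt4_general (one_lt_two.trans_le hp) hlam.le (half_lt_self hlam) μ
    hF.continuous.lowerSemicontinuous hconv
end

section
/- Let p ≥ 2 be real, μ ∈ [0,1], λ > 0, m a positive integer, and let F : ℝ^m → ℝ satisfy condition (H1), i.e. the map z ↦ F(z) − λ (μ² + |z|²)^{p/2} is convex on ℝ^m. Then there exists a constant c = c(p, m) > 0, independent of F, λ and μ, such that for all z, w ∈ ℝ^m, F((z + w)/2) + c λ |z − w|^p ≤ (F(z) + F(w))/2. -/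
/-!
By the weighted parallelogram identity, `a (μ² + |z|²) + b (μ² + |w|²)` equals
`(μ² + |a z + b w|²) + a b |z - w|²` when `a + b = 1`. Since `p / 2 ≥ 1`, the power
`t ↦ t ^ (p / 2)` is convex and superadditive on `[0, ∞)`, so `(μ² + |z|²) ^ (p / 2)` has convexity
gap at least `(a b) ^ (p / 2) |z - w| ^ p`. A function that differs from `λ` times this one by a
convex function inherits `λ` times the gap. The midpoint `a = b = 1 / 2` gives `c = 2 ^ (-p)`.
-/

lemma mul_sq_rpow_half {p t r : ℝ} (ht : 0 ≤ t) (hr : 0 ≤ r) :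
    (t * r ^ 2) ^ (p / 2) = t ^ (p / 2) * r ^ p := by
  rw [Real.mul_rpow ht (sq_nonneg r), ← Real.rpow_natCast_mul hr, Nat.cast_two,
    mul_div_cancel₀ p two_ne_zero]

section InnerProductSpace

variable {E : Type*} [NormedAddCommGroup E] [InnerProductSpace ℝ E] {a b p : ℝ}

lemma norm_smul_add_smul_sq_add_mul_norm_sub_sq (hab : a + b = 1) (x y : E) :
    ‖a • x + b • y‖ ^ 2 + a * b * ‖x - y‖ ^ 2 = a * ‖x‖ ^ 2 + b * ‖y‖ ^ 2 := by
  rw [norm_add_sq_real, norm_sub_sq_real]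
  simp only [norm_smul, real_inner_smul_left, real_inner_smul_right, mul_pow, Real.norm_eq_abs,
    sq_abs]
  linear_combination (a * ‖x‖ ^ 2 + b * ‖y‖ ^ 2) * hab

lemma add_norm_sq_rpow_smul_add_smul_le {c : ℝ} (hc : 0 ≤ c) (hp : 2 ≤ p) (ha : 0 ≤ a)
    (hb : 0 ≤ b) (hab : a + b = 1) (x y : E) :
    (c + ‖a • x + b • y‖ ^ 2) ^ (p / 2) + (a * b) ^ (p / 2) * ‖x - y‖ ^ p ≤
      a * (c + ‖x‖ ^ 2) ^ (p / 2) + b * (c + ‖y‖ ^ 2) ^ (p / 2) := by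
  have one_le_half : 1 ≤ p / 2 := by linarith
  calc
    (c + ‖a • x + b • y‖ ^ 2) ^ (p / 2) + (a * b) ^ (p / 2) * ‖x - y‖ ^ p
    _ = (c + ‖a • x + b • y‖ ^ 2) ^ (p / 2) + (a * b * ‖x - y‖ ^ 2) ^ (p / 2) := by
      rw [mul_sq_rpow_half (mul_nonneg ha hb) (norm_nonneg _)]
    _ ≤ (c + ‖a • x + b • y‖ ^ 2 + a * b * ‖x - y‖ ^ 2) ^ (p / 2) :=
      Real.add_rpow_le_rpow_add (by positivity) (by positivity) one_le_half
    _ = (a * (c + ‖x‖ ^ 2) + b * (c + ‖y‖ ^ 2)) ^ (p / 2) := by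
      congr 1
      linear_combination norm_smul_add_smul_sq_add_mul_norm_sub_sq hab x y - c * hab
    _ ≤ a * (c + ‖x‖ ^ 2) ^ (p / 2) + b * (c + ‖y‖ ^ 2) ^ (p / 2) :=
      (convexOn_rpow one_le_half).2 (Set.mem_Ici.2 (by positivity))
        (Set.mem_Ici.2 (by positivity)) ha hb hab

theorem stmt5_general {μ lam : ℝ} {s : Set E} {F : E → ℝ} (hp : 2 ≤ p) (hlam : 0 ≤ lam)
    (hF : ConvexOn ℝ s (fun z => F z - lam * (μ ^ 2 + ‖z‖ ^ 2) ^ (p / 2)))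
    {z w : E} (hz : z ∈ s) (hw : w ∈ s) (ha : 0 ≤ a) (hb : 0 ≤ b) (hab : a + b = 1) :
    F (a • z + b • w) + (a * b) ^ (p / 2) * lam * ‖z - w‖ ^ p ≤ a * F z + b * F w := by
  have hconv := hF.2 hz hw ha hb hab
  have hgap := add_norm_sq_rpow_smul_add_smul_le (sq_nonneg μ) hp ha hb hab z w
  simp only [smul_eq_mul] at hconv
  linear_combination hconv + lam * hgap

end InnerProductSpace

/-- condition (H1) implies uniform `p`-convexity of `F`. -/
theorem stmt5 (p : ℝ) (hp : 2 ≤ p) (m : ℕ) (hm : 0 < m) :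
    ∃ c : ℝ, 0 < c ∧
      ∀ (μ lam : ℝ), μ ∈ Set.Icc (0 : ℝ) 1 → 0 < lam →
        ∀ F : EuclideanSpace ℝ (Fin m) → ℝ,
          ConvexOn ℝ Set.univ (fun z => F z - lam * (μ ^ 2 + ‖z‖ ^ 2) ^ (p / 2)) →
          ∀ z w : EuclideanSpace ℝ (Fin m),
            F ((2 : ℝ)⁻¹ • (z + w)) + c * lam * ‖z - w‖ ^ p ≤ (F z + F w) / 2 := by
  refine ⟨(2⁻¹ * 2⁻¹) ^ (p / 2), by positivity, fun μ lam _ hlam F hF z w ↦ ?_⟩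
  rw [smul_add]
  linear_combination stmt5_general hp hlam.le hF (Set.mem_univ z)
    (Set.mem_univ w) (inv_nonneg.2 zero_le_two) (inv_nonneg.2 zero_le_two) (by norm_num)
end

section
/- Let q ≥ 1 and Λ > 0 be real, m a positive integer, and let F : ℝ^m → ℝ be convex with |F(z)| ≤ Λ (1 + |z|^q) for all z ∈ ℝ^m. Then there exists a constant C = C(q) > 0, independent of F, Λ and m, such that for all z, w ∈ ℝ^m, |F(z) − F(w)| ≤ C Λ (1 + |z| + |w|)^{q−1} |z − w|. -/
/-!
On the ball of radius `2 * R` the growth condition bounds `|F|` by a multiple of `Lam * R ^ q`.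
A convex function bounded by `M` in absolute value on a ball is `2 * M / ε`-Lipschitz on the
concentric ball whose radius is smaller by `ε`; taking `ε = R` gives a Lipschitz constant of order
`Lam * R ^ (q - 1)` on the ball of radius `R`, and `R = 1 + ‖z‖ + ‖w‖` puts both points in it.
-/

lemma one_add_rpow_le_two_mul_rpow {q r R : ℝ} (hq : 0 ≤ q) (hr : 0 ≤ r) (hR : 1 ≤ R)
    (hrR : r ≤ R) : 1 + r ^ q ≤ 2 * R ^ q := by
  have h_one : 1 ≤ R ^ q := Real.one_le_rpow hR hq
  have h_rpow : r ^ q ≤ R ^ q := Real.rpow_le_rpow hr hrR hq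
  linarith

section Growth

variable {E : Type*} [SeminormedAddCommGroup E] {F : E → ℝ} {q Lam R : ℝ}

lemma nonneg_of_abs_le_mul_one_add_norm_rpow
    (hG : ∀ x, |F x| ≤ Lam * (1 + ‖x‖ ^ q)) : 0 ≤ Lam :=
  nonneg_of_mul_nonneg_left ((abs_nonneg _).trans (hG 0)) (by positivity)

lemma abs_le_two_mul_mul_rpow_of_norm_le (hq : 0 ≤ q)
    (hG : ∀ x, |F x| ≤ Lam * (1 + ‖x‖ ^ q)) (hR : 1 ≤ R) {x : E} (hx : ‖x‖ ≤ R) :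
    |F x| ≤ 2 * Lam * R ^ q :=
  have hLam : 0 ≤ Lam := nonneg_of_abs_le_mul_one_add_norm_rpow hG
  calc
    |F x| ≤ Lam * (1 + ‖x‖ ^ q) := hG x
    _ ≤ Lam * (2 * R ^ q) := by
      gcongr
      exact one_add_rpow_le_two_mul_rpow hq (norm_nonneg x) hR hx
    _ = 2 * Lam * R ^ q := by ring

end Growth

section Convex

variable {E : Type*} [NormedAddCommGroup E] [NormedSpace ℝ E] {F : E → ℝ} {q Lam R : ℝ}

lemma lipschitzOnWith_ball_of_convexOn_of_abs_le_rpow (hq : 0 ≤ q)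
    (hF : ConvexOn ℝ Set.univ F) (hG : ∀ x, |F x| ≤ Lam * (1 + ‖x‖ ^ q)) (hR : 1 ≤ R) :
    LipschitzOnWith (4 * 2 ^ q * Lam * R ^ (q - 1)).toNNReal F (Metric.ball 0 R) := by
  have hR_pos : 0 < R := by linarith
  have h_bound : ∀ x, dist x 0 < 2 * R → |F x| ≤ 2 * Lam * (2 * R) ^ q := fun x hx ↦
    abs_le_two_mul_mul_rpow_of_norm_le hq hG (by linarith) (by simpa using hx.le)
  have h_const : 2 * (2 * Lam * (2 * R) ^ q) / R = 4 * 2 ^ q * Lam * R ^ (q - 1) := by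
    rw [Real.mul_rpow zero_le_two hR_pos.le, Real.rpow_sub_one hR_pos.ne']
    ring
  have h_radius : 2 * R - R = R := by ring
  have h_lip := (hF.subset (Set.subset_univ _) (convex_ball 0 (2 * R))).lipschitzOnWith_of_abs_le
    hR_pos h_bound
  rwa [h_const, h_radius] at h_lip

theorem stmt6_general (hq : 0 ≤ q)
    (hF : ConvexOn ℝ Set.univ F) (hG : ∀ x, |F x| ≤ Lam * (1 + ‖x‖ ^ q)) (z w : E) :
    |F z - F w| ≤ 4 * 2 ^ q * Lam * (1 + ‖z‖ + ‖w‖) ^ (q - 1) * ‖z - w‖ := by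
  have hz := norm_nonneg z
  have hw := norm_nonneg w
  have hLam : 0 ≤ Lam := nonneg_of_abs_le_mul_one_add_norm_rpow hG
  have h_lip := lipschitzOnWith_ball_of_convexOn_of_abs_le_rpow (R := 1 + ‖z‖ + ‖w‖) hq hF hG
    (by linarith)
  have hz_mem : z ∈ Metric.ball 0 (1 + ‖z‖ + ‖w‖) := by rw [mem_ball_zero_iff]; linarith
  have hw_mem : w ∈ Metric.ball 0 (1 + ‖z‖ + ‖w‖) := by rw [mem_ball_zero_iff]; linarith
  have h_dist := h_lip.dist_le_mul z hz_mem w hw_mem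
  rwa [Real.coe_toNNReal _ (by positivity), Real.dist_eq, dist_eq_norm] at h_dist

end Convex

/-- a convex function with `q`-growth is locally Lipschitz with the
natural growth of the Lipschitz constant. -/
theorem stmt6 (q : ℝ) (hq : 1 ≤ q) :
    ∃ C : ℝ, 0 < C ∧
      ∀ m : ℕ, 0 < m → ∀ Lam : ℝ, 0 < Lam →
        ∀ F : EuclideanSpace ℝ (Fin m) → ℝ, ConvexOn ℝ Set.univ F →
          (∀ z : EuclideanSpace ℝ (Fin m), |F z| ≤ Lam * (1 + ‖z‖ ^ q)) →
          ∀ z w : EuclideanSpace ℝ (Fin m),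
            |F z - F w| ≤ C * Lam * (1 + ‖z‖ + ‖w‖) ^ (q - 1) * ‖z - w‖ :=
  ⟨4 * 2 ^ q, by positivity, fun _ _ _ _ _ hF hG z w ↦
    stmt6_general (zero_le_one.trans hq) hF hG z w⟩
end

section
/- Let q ≥ 1 and Λ > 0 be real, m a positive integer, and let F : ℝ^m → ℝ be convex and differentiable with |F(z)| ≤ Λ (1 + |z|^q) for all z ∈ ℝ^m. Then there exists a constant C = C(q) > 0, independent of F, Λ and m, such that |∇F(z)| ≤ C Λ (1 + |z|)^{q−1} for all z ∈ ℝ^m. -/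
/-!
A convex function bounded by `M` in absolute value on a ball of radius `r` has derivative of norm at
most `2 * M / r` at the centre. On the ball of radius `1 + ‖z‖` about `z` the growth condition gives
such a bound with `M` of order `Λ * (1 + ‖z‖) ^ q`, and dividing by the radius lowers the exponent
to `q - 1`.
-/

open Filter Metric Set Topology

theorem one_add_rpow_le_mul_rpow {q x c R : ℝ} (hq : 0 ≤ q) (hx : 0 ≤ x) (hc : 0 ≤ c)
    (hR : 1 ≤ R) (hxR : x ≤ c * R) : 1 + x ^ q ≤ (1 + c ^ q) * R ^ q :=
  calc 1 + x ^ q ≤ R ^ q + (c * R) ^ q := by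
        gcongr
        exact Real.one_le_rpow hR hq
    _ = (1 + c ^ q) * R ^ q := by
        rw [Real.mul_rpow hc (zero_le_one.trans hR)]
        ring

theorem abs_le_on_ball_of_abs_le_growth {E : Type*} [SeminormedAddCommGroup E] {F : E → ℝ}
    {q Λ : ℝ} (hq : 0 ≤ q) (hgrowth : ∀ y, |F y| ≤ Λ * (1 + ‖y‖ ^ q)) (z : E) :
    ∀ y ∈ ball z (1 + ‖z‖), |F y| ≤ Λ * ((1 + 2 ^ q) * (1 + ‖z‖) ^ q) := by
  intro y hy
  have hΛ : 0 ≤ Λ :=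
    nonneg_of_mul_nonneg_left ((abs_nonneg _).trans (hgrowth y)) (by positivity)
  have hnorm : ‖y‖ ≤ 2 * (1 + ‖z‖) := by
    linarith [norm_le_norm_add_norm_sub' y z, mem_ball_iff_norm.1 hy]
  refine (hgrowth y).trans (mul_le_mul_of_nonneg_left ?_ hΛ)
  exact one_add_rpow_le_mul_rpow hq (norm_nonneg y) zero_le_two
    (le_add_of_nonneg_right (norm_nonneg z)) hnorm

section NormedSpace

variable {E : Type*} [NormedAddCommGroup E] [NormedSpace ℝ E] {F : E → ℝ} {F' : E →L[ℝ] ℝ} {z : E}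

theorem norm_le_of_hasFDerivAt_of_convexOn_ball {r M : ℝ} (hr : 0 < r)
    (hconv : ConvexOn ℝ (ball z r) F) (hM : ∀ y ∈ ball z r, |F y| ≤ M)
    (hF' : HasFDerivAt F F' z) : ‖F'‖ ≤ 2 * M / r := by
  have hM₀ : 0 ≤ M := (abs_nonneg _).trans (hM z (mem_ball_self hr))
  have norm_le_of_lt : ∀ ε ∈ Ioo 0 r, ‖F'‖ ≤ 2 * M / ε := by
    intro ε ⟨hε, hεr⟩
    have hlip : LipschitzOnWith (2 * M / ε).toNNReal F (ball z (r - ε)) :=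
      hconv.lipschitzOnWith_of_abs_le hε hM
    have hnorm := hF'.le_of_lipschitzOn (ball_mem_nhds z (sub_pos.2 hεr)) hlip
    rwa [Real.coe_toNNReal _ (by positivity)] at hnorm
  have hlim : Tendsto (fun ε ↦ 2 * M / ε) (𝓝[<] r) (𝓝 (2 * M / r)) :=
    (tendsto_const_nhds.div tendsto_id hr.ne').mono_left nhdsWithin_le_nhds
  exact ge_of_tendsto hlim (eventually_of_mem (Ioo_mem_nhdsLT hr) norm_le_of_lt)

theorem stmt7_general {q Λ : ℝ} (hq : 0 ≤ q) (hconv : ConvexOn ℝ univ F)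
    (hgrowth : ∀ y, |F y| ≤ Λ * (1 + ‖y‖ ^ q)) (hF' : HasFDerivAt F F' z) :
    ‖F'‖ ≤ 2 * (1 + 2 ^ q) * Λ * (1 + ‖z‖) ^ (q - 1) := by
  have hr : 0 < 1 + ‖z‖ := by positivity
  have hconv_ball : ConvexOn ℝ (ball z (1 + ‖z‖)) F :=
    hconv.subset (subset_univ _) (convex_ball z _)
  calc ‖F'‖ ≤ 2 * (Λ * ((1 + 2 ^ q) * (1 + ‖z‖) ^ q)) / (1 + ‖z‖) :=
        norm_le_of_hasFDerivAt_of_convexOn_ball hr hconv_ball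
          (abs_le_on_ball_of_abs_le_growth hq hgrowth z) hF'
    _ = 2 * (1 + 2 ^ q) * Λ * (1 + ‖z‖) ^ (q - 1) := by
        rw [Real.rpow_sub_one hr.ne']
        ring

end NormedSpace

/-- gradient bound for convex differentiable functions with `q`-growth. -/
theorem stmt7 (q : ℝ) (hq : 1 ≤ q) :
    ∃ C : ℝ, 0 < C ∧
      ∀ m : ℕ, 0 < m → ∀ Lam : ℝ, 0 < Lam →
        ∀ F : EuclideanSpace ℝ (Fin m) → ℝ, ConvexOn ℝ Set.univ F → Differentiable ℝ F →
          (∀ z : EuclideanSpace ℝ (Fin m), |F z| ≤ Lam * (1 + ‖z‖ ^ q)) →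
          ∀ z : EuclideanSpace ℝ (Fin m),
            ‖gradient F z‖ ≤ C * Lam * (1 + ‖z‖) ^ (q - 1) := by
  refine ⟨2 * (1 + 2 ^ q), by positivity, fun m _ Lam _ F hconv hdiff hgrowth z ↦ ?_⟩
  simpa only [gradient, LinearIsometryEquiv.norm_map] using
    stmt7_general (zero_le_one.trans hq) hconv hgrowth (hdiff z).hasFDerivAt
end

section
/- Let ρ < σ be real numbers, δ ∈ (0, 1], and let b : ℝ → ℝ be measurable with b(r) ≥ 1 for almost every r ∈ (ρ, σ) and with r ↦ b(r)^δ Lebesgue integrable on (ρ, σ). Define φ : [ρ, σ] → ℝ by φ(r) = 1 − (∫_ρ^r b(τ)^{−1} dτ) / (∫_ρ^σ b(τ)^{−1} dτ). Then for all ρ ≤ r₁ < r₂ ≤ σ one has (φ(r₁) − φ(r₂)) / (r₂ − r₁) ≤ (σ − ρ)^{−1−1/δ} (∫_ρ^σ b(r)^δ dr)^{1/δ}. -/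
/-!
Every increment of the profile over `[r₁, r₂]` equals `J⁻¹ ∫_{r₁}^{r₂} b⁻¹`, where
`J = ∫_ρ^σ b⁻¹`, so `b ≥ 1` bounds its slope by `J⁻¹`. Hölder's inequality applied to
`1 = (b⁻¹) ^ (δ / (1 + δ)) * (b ^ δ) ^ (1 / (1 + δ))` then bounds `J` from below.
-/

open MeasureTheory

section MeasureSpace

variable {α : Type*} [MeasurableSpace α] {μ : Measure α} {f g : α → ℝ} {p q δ : ℝ}

theorem integral_rpow_mul_rpow_le (hf : Integrable f μ) (hg : Integrable g μ)
    (hf₀ : 0 ≤ᵐ[μ] f) (hg₀ : 0 ≤ᵐ[μ] g) (hp : 0 ≤ p) (hq : 0 ≤ q) (hpq : p + q = 1) :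
    ∫ x, f x ^ p * g x ^ q ∂μ ≤ (∫ x, f x ∂μ) ^ p * (∫ x, g x ∂μ) ^ q := by
  have hF : 0 ≤ ∫ x, f x ∂μ := integral_nonneg_of_ae hf₀
  have hG : 0 ≤ ∫ x, g x ∂μ := integral_nonneg_of_ae hg₀
  have hfg₀ : 0 ≤ᵐ[μ] fun x ↦ f x ^ p * g x ^ q := by
    filter_upwards [hf₀, hg₀] with x hfx hgx
    exact mul_nonneg (Real.rpow_nonneg hfx p) (Real.rpow_nonneg hgx q)
  have hfg_meas : AEStronglyMeasurable (fun x ↦ f x ^ p * g x ^ q) μ :=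
    ((hf.aemeasurable.pow_const p).mul (hg.aemeasurable.pow_const q)).aestronglyMeasurable
  rw [integral_eq_lintegral_of_nonneg_ae hfg₀ hfg_meas]
  refine ENNReal.toReal_le_of_le_ofReal (by positivity) ?_
  calc ∫⁻ x, ENNReal.ofReal (f x ^ p * g x ^ q) ∂μ
      = ∫⁻ x, ENNReal.ofReal (f x) ^ p * ENNReal.ofReal (g x) ^ q ∂μ := by
        refine lintegral_congr_ae ?_
        filter_upwards [hf₀, hg₀] with x hfx hgx
        rw [ENNReal.ofReal_mul (Real.rpow_nonneg hfx p),
          ENNReal.ofReal_rpow_of_nonneg hfx hp, ENNReal.ofReal_rpow_of_nonneg hgx hq]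
    _ ≤ (∫⁻ x, ENNReal.ofReal (f x) ∂μ) ^ p * (∫⁻ x, ENNReal.ofReal (g x) ∂μ) ^ q :=
        ENNReal.lintegral_mul_norm_pow_le hf.aemeasurable.ennreal_ofReal
          hg.aemeasurable.ennreal_ofReal hp hq hpq
    _ = ENNReal.ofReal ((∫ x, f x ∂μ) ^ p * (∫ x, g x ∂μ) ^ q) := by
        rw [← ofReal_integral_eq_lintegral_ofReal hf hf₀,
          ← ofReal_integral_eq_lintegral_ofReal hg hg₀, ENNReal.ofReal_rpow_of_nonneg hF hp,
          ENNReal.ofReal_rpow_of_nonneg hG hq, ENNReal.ofReal_mul (Real.rpow_nonneg hF p)]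

theorem measureReal_univ_rpow_le_integral_inv_mul (hδ : 0 < δ) (hf : ∀ᵐ x ∂μ, 0 < f x)
    (hinv : Integrable (fun x ↦ (f x)⁻¹) μ) (hpow : Integrable (fun x ↦ f x ^ δ) μ) :
    μ.real Set.univ ^ (1 + 1 / δ) ≤ (∫ x, (f x)⁻¹ ∂μ) * (∫ x, f x ^ δ ∂μ) ^ (1 / δ) := by
  have hinv₀ : 0 ≤ᵐ[μ] fun x ↦ (f x)⁻¹ := hf.mono fun _ hx ↦ (inv_pos.2 hx).le
  have hpow₀ : 0 ≤ᵐ[μ] fun x ↦ f x ^ δ := hf.mono fun _ hx ↦ Real.rpow_nonneg hx.le δ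
  have hJ : 0 ≤ ∫ x, (f x)⁻¹ ∂μ := integral_nonneg_of_ae hinv₀
  have hM : 0 ≤ ∫ x, f x ^ δ ∂μ := integral_nonneg_of_ae hpow₀
  have hone : ∀ᵐ x ∂μ, (f x)⁻¹ ^ (δ / (1 + δ)) * (f x ^ δ) ^ (1 / (1 + δ)) = 1 := by
    filter_upwards [hf] with x hx
    have hexp : -1 * (δ / (1 + δ)) + δ * (1 / (1 + δ)) = 0 := by ring
    rw [← Real.rpow_neg_one, ← Real.rpow_mul hx.le, ← Real.rpow_mul hx.le, ← Real.rpow_add hx,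
      hexp, Real.rpow_zero]
  have holder : μ.real Set.univ ≤
      (∫ x, (f x)⁻¹ ∂μ) ^ (δ / (1 + δ)) * (∫ x, f x ^ δ ∂μ) ^ (1 / (1 + δ)) := by
    calc μ.real Set.univ
        = ∫ x, (f x)⁻¹ ^ (δ / (1 + δ)) * (f x ^ δ) ^ (1 / (1 + δ)) ∂μ := by
          rw [integral_congr_ae hone, integral_const, smul_eq_mul, mul_one]
      _ ≤ _ := integral_rpow_mul_rpow_le hinv hpow hinv₀ hpow₀ (by positivity) (by positivity)
          (by field_simp; ring)
  calc μ.real Set.univ ^ (1 + 1 / δ)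
      ≤ ((∫ x, (f x)⁻¹ ∂μ) ^ (δ / (1 + δ)) * (∫ x, f x ^ δ ∂μ) ^ (1 / (1 + δ))) ^
          (1 + 1 / δ) := by gcongr
    _ = (∫ x, (f x)⁻¹ ∂μ) * (∫ x, f x ^ δ ∂μ) ^ (1 / δ) := by
        have hJ_exp : δ / (1 + δ) * (1 + 1 / δ) = 1 := by field_simp; ring
        have hM_exp : 1 / (1 + δ) * (1 + 1 / δ) = 1 / δ := by field_simp; ring
        rw [Real.mul_rpow (by positivity) (by positivity), ← Real.rpow_mul hJ,
          ← Real.rpow_mul hM, hJ_exp, hM_exp, Real.rpow_one]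

theorem integrable_inv_of_one_le_of_integrable_rpow [IsFiniteMeasure μ] (hδ : δ ≠ 0)
    (hf : ∀ᵐ x ∂μ, 1 ≤ f x) (hpow : Integrable (fun x ↦ f x ^ δ) μ) :
    Integrable (fun x ↦ (f x)⁻¹) μ := by
  -- Measurability of `f⁻¹` comes from that of `f ^ δ`, of which it is a.e. a power.
  have hpow_inv : (fun x ↦ (f x ^ δ) ^ (-1 / δ)) =ᵐ[μ] fun x ↦ (f x)⁻¹ := by
    filter_upwards [hf] with x hx
    rw [← Real.rpow_mul (by positivity), mul_div_cancel₀ _ hδ, Real.rpow_neg_one]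
  have hmeas : AEStronglyMeasurable (fun x ↦ (f x)⁻¹) μ :=
    ((hpow.aemeasurable.pow_const (-1 / δ)).congr hpow_inv).aestronglyMeasurable
  refine Integrable.of_bound hmeas 1 ?_
  filter_upwards [hf] with x hx
  rw [Real.norm_of_nonneg (by positivity)]
  exact inv_le_one_of_one_le₀ hx

end MeasureSpace

/-- The radial cut-off profile with weight `b`, which decreases from `1` at `ρ` to `0` at `σ`.
It is defined on all of `ℝ`, but only its values on `[ρ, σ]` are meaningful. -/
noncomputable def radialCutoff (ρ σ : ℝ) (b : ℝ → ℝ) (r : ℝ) : ℝ :=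
  1 - (∫ τ in ρ..r, (b τ)⁻¹) / (∫ τ in ρ..σ, (b τ)⁻¹)

section Interval

variable {ρ σ δ r₁ r₂ : ℝ} {b : ℝ → ℝ}

theorem radialCutoff_sub_radialCutoff (h₁ : IntervalIntegrable (fun τ ↦ (b τ)⁻¹) volume ρ r₁)
    (h₂ : IntervalIntegrable (fun τ ↦ (b τ)⁻¹) volume ρ r₂) :
    radialCutoff ρ σ b r₁ - radialCutoff ρ σ b r₂ =
      (∫ τ in r₁..r₂, (b τ)⁻¹) / (∫ τ in ρ..σ, (b τ)⁻¹) := by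
  rw [← intervalIntegral.integral_interval_sub_left h₂ h₁]
  simp only [radialCutoff]
  ring

theorem intervalIntegral_inv_le_sub (hr : r₁ ≤ r₂)
    (hb : ∀ᵐ r ∂(volume.restrict (Set.Ioo r₁ r₂)), 1 ≤ b r) :
    ∫ τ in r₁..r₂, (b τ)⁻¹ ≤ r₂ - r₁ := by
  have hbound : ∀ᵐ τ ∂(volume.restrict (Set.Ioo r₁ r₂)), ‖(b τ)⁻¹‖ ≤ 1 := by
    filter_upwards [hb] with τ hτ
    rw [Real.norm_of_nonneg (by positivity)]
    exact inv_le_one_of_one_le₀ hτ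
  calc ∫ τ in r₁..r₂, (b τ)⁻¹ = ∫ τ in Set.Ioo r₁ r₂, (b τ)⁻¹ := by
        rw [intervalIntegral.integral_of_le hr, integral_Ioc_eq_integral_Ioo]
    _ ≤ ‖∫ τ in Set.Ioo r₁ r₂, (b τ)⁻¹‖ := Real.le_norm_self _
    _ ≤ r₂ - r₁ := by
        simpa [hr] using norm_integral_le_of_norm_le_const hbound

theorem sub_rpow_le_intervalIntegral_inv_mul (hρσ : ρ ≤ σ) (hδ : 0 < δ)
    (hb : ∀ᵐ r ∂(volume.restrict (Set.Ioo ρ σ)), 0 < b r)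
    (hinv : IntegrableOn (fun r ↦ (b r)⁻¹) (Set.Ioo ρ σ))
    (hpow : IntegrableOn (fun r ↦ b r ^ δ) (Set.Ioo ρ σ)) :
    (σ - ρ) ^ (1 + 1 / δ) ≤
      (∫ τ in ρ..σ, (b τ)⁻¹) * (∫ r in Set.Ioo ρ σ, b r ^ δ) ^ (1 / δ) := by
  rw [intervalIntegral.integral_of_le hρσ, integral_Ioc_eq_integral_Ioo]
  simpa only [measureReal_restrict_apply_univ, Real.volume_real_Ioo_of_le hρσ] using
    measureReal_univ_rpow_le_integral_inv_mul hδ hb hinv hpow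

theorem radialCutoff_sub_div_sub_le_inv (hb : ∀ᵐ r ∂(volume.restrict (Set.Ioo ρ σ)), 1 ≤ b r)
    (hinv : IntegrableOn (fun r ↦ (b r)⁻¹) (Set.Ioo ρ σ))
    (h₁ : ρ ≤ r₁) (h₁₂ : r₁ < r₂) (h₂ : r₂ ≤ σ) :
    (radialCutoff ρ σ b r₁ - radialCutoff ρ σ b r₂) / (r₂ - r₁) ≤
      (∫ τ in ρ..σ, (b τ)⁻¹)⁻¹ := by
  have hJ : 0 ≤ ∫ τ in ρ..σ, (b τ)⁻¹ := by
    rw [intervalIntegral.integral_of_le (h₁.trans (h₁₂.le.trans h₂)), integral_Ioc_eq_integral_Ioo]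
    exact integral_nonneg_of_ae (hb.mono fun _ hr ↦ inv_nonneg.2 (zero_le_one.trans hr))
  have hinterval {r : ℝ} (hρr : ρ ≤ r) (hrσ : r ≤ σ) :
      IntervalIntegrable (fun τ ↦ (b τ)⁻¹) volume ρ r :=
    (intervalIntegrable_iff_integrableOn_Ioo_of_le hρr).2
      (hinv.mono_set (Set.Ioo_subset_Ioo_right hrσ))
  have hincrement : ∫ τ in r₁..r₂, (b τ)⁻¹ ≤ r₂ - r₁ :=
    intervalIntegral_inv_le_sub h₁₂.le
      (ae_restrict_of_ae_restrict_of_subset (Set.Ioo_subset_Ioo h₁ h₂) hb)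
  rw [radialCutoff_sub_radialCutoff (hinterval h₁ (h₁₂.le.trans h₂))
    (hinterval (h₁.trans h₁₂.le) h₂), div_le_iff₀ (sub_pos.2 h₁₂), div_eq_inv_mul]
  gcongr

theorem stmt10_general (hδ : 0 < δ)
    (hb : ∀ᵐ r ∂(volume.restrict (Set.Ioo ρ σ)), 1 ≤ b r)
    (hint : IntegrableOn (fun r ↦ b r ^ δ) (Set.Ioo ρ σ))
    (h₁ : ρ ≤ r₁) (h₁₂ : r₁ < r₂) (h₂ : r₂ ≤ σ) :
    (radialCutoff ρ σ b r₁ - radialCutoff ρ σ b r₂) / (r₂ - r₁) ≤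
      (σ - ρ) ^ (-1 - 1 / δ) * (∫ r in Set.Ioo ρ σ, b r ^ δ) ^ (1 / δ) := by
  have hρσ : ρ < σ := h₁.trans_lt (h₁₂.trans_le h₂)
  have hb₀ : ∀ᵐ r ∂(volume.restrict (Set.Ioo ρ σ)), 0 < b r :=
    hb.mono fun _ ↦ zero_lt_one.trans_le
  have hinv : IntegrableOn (fun r ↦ (b r)⁻¹) (Set.Ioo ρ σ) :=
    integrable_inv_of_one_le_of_integrable_rpow hδ.ne' hb hint
  have hM : 0 ≤ (∫ r in Set.Ioo ρ σ, b r ^ δ) ^ (1 / δ) :=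
    Real.rpow_nonneg (integral_nonneg_of_ae (hb₀.mono fun _ hr ↦ Real.rpow_nonneg hr.le δ)) _
  have hL : 0 < (σ - ρ) ^ (1 + 1 / δ) := Real.rpow_pos_of_pos (sub_pos.2 hρσ) _
  have hLJM := sub_rpow_le_intervalIntegral_inv_mul hρσ.le hδ hb₀ hinv hint
  have hJ : 0 < ∫ τ in ρ..σ, (b τ)⁻¹ := pos_of_mul_pos_left (hL.trans_le hLJM) hM
  calc (radialCutoff ρ σ b r₁ - radialCutoff ρ σ b r₂) / (r₂ - r₁)
      ≤ (∫ τ in ρ..σ, (b τ)⁻¹)⁻¹ := radialCutoff_sub_div_sub_le_inv hb hinv h₁ h₁₂ h₂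
    _ ≤ ((σ - ρ) ^ (1 + 1 / δ))⁻¹ * (∫ r in Set.Ioo ρ σ, b r ^ δ) ^ (1 / δ) := by
        rwa [inv_le_iff_one_le_mul₀' hJ, mul_left_comm, one_le_inv_mul₀ hL]
    _ = (σ - ρ) ^ (-1 - 1 / δ) * (∫ r in Set.Ioo ρ σ, b r ^ δ) ^ (1 / δ) := by
        rw [← Real.rpow_neg (sub_pos.2 hρσ).le, neg_add']

end Interval

/-- difference-quotient bound for the optimised radial cut-off profile. -/
theorem stmt10 (ρ σ δ : ℝ) (hρσ : ρ < σ) (hδ : δ ∈ Set.Ioc (0 : ℝ) 1)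
    (b : ℝ → ℝ) (hb_meas : Measurable b)
    (hb : ∀ᵐ r ∂(volume.restrict (Set.Ioo ρ σ)), 1 ≤ b r)
    (hint : IntegrableOn (fun r => b r ^ δ) (Set.Ioo ρ σ)) :
    let φ : ℝ → ℝ := fun r =>
      1 - (∫ τ in ρ..r, (b τ)⁻¹) / (∫ τ in ρ..σ, (b τ)⁻¹)
    ∀ r₁ r₂ : ℝ, ρ ≤ r₁ → r₁ < r₂ → r₂ ≤ σ →
      (φ r₁ - φ r₂) / (r₂ - r₁) ≤
        (σ - ρ) ^ (-1 - 1 / δ) * (∫ r in Set.Ioo ρ σ, b r ^ δ) ^ (1 / δ) := by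
  intro _ r₁ r₂ h₁ h₁₂ h₂
  exact stmt10_general hδ.1 hb hint h₁ h₁₂ h₂
end
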